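/- As the real variable x tends to 0, (1/16)·∑_{n=0}^∞ 2^{−6(n+x)} · [ (1/2)_{n+x} / (1)_{n+x} ]³ · (42(n+x)+5) = 1/π − 3π x² + 64 G x³ + O(x⁴), where G is Catalan's constant; in particular the coefficients of x⁰, x¹, x², x³ in the expansion are 1/π, 0, −3π, 64G respectively. -/

import Mathlib

/-- The Pochhammer symbol for real index: `(a)_t = Γ(a+t)/Γ(a)`. -/
noncomputable def pochG (a t : ℝ) : ℝ := Real.Gamma (a + t) / Real.Gamma a

/-- Catalan's constant `G = ∑_{n≥0} (-1)^n/(2n+1)²`. -/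
noncomputable def catalan' : ℝ := ∑' n : ℕ, (-1 : ℝ) ^ n / (2 * (n : ℝ) + 1) ^ 2

open Filter Topology

theorem Gamma_add_nat_eq_prod (a : ℝ) (ha : 0 < a) (n : ℕ) :
    Real.Gamma (a + n) = (∏ j ∈ Finset.range n, (a + j)) * Real.Gamma a := by
  induction n with
  | zero => simp
  | succ n ih =>
    rw [Finset.prod_range_succ, Nat.cast_succ, ← add_assoc, Real.Gamma_add_one (by positivity), ih]
    ring

theorem tendsto_Gamma_add_nat_of_pos (a : ℝ) (ha : 0 < a) :
    Tendsto (fun n : ℕ => Real.Gamma (a + n + 1) / (n.factorial * (n : ℝ) ^ a)) atTop (𝓝 1) := by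
  have hG := (Real.Gamma_pos_of_pos ha).ne'
  have h := (Real.GammaSeq_tendsto_Gamma a).inv₀ hG |>.mul_const (Real.Gamma a)
  rw [inv_mul_cancel₀ hG] at h
  refine h.congr fun n => ?_
  have := Gamma_add_nat_eq_prod a ha (n + 1)
  push_cast at this
  rw [add_assoc, this, Real.GammaSeq, inv_div]
  ring

theorem tendsto_nat_div_add (c : ℝ) :
    Tendsto (fun n : ℕ => (n : ℝ) / (c + n)) atTop (𝓝 1) := by
  have := tendsto_natCast_div_add_atTop (𝕜 := ℝ) c
  simpa [add_comm] using this

theorem tendsto_Gamma_add_nat_sub (k : ℕ) (a : ℝ) (ha : 0 < a + k) :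
    Tendsto (fun n : ℕ => Real.Gamma (a + n + 1) / (n.factorial * (n : ℝ) ^ a)) atTop (𝓝 1) := by
  induction k generalizing a with
  | zero => exact tendsto_Gamma_add_nat_of_pos a (by simpa using ha)
  | succ k ih =>
    have h := (ih (a + 1) (by push_cast at ha; linarith)).mul (tendsto_nat_div_add (a + 1))
    rw [one_mul] at h
    refine h.congr' ?_
    obtain ⟨m, hm⟩ := exists_nat_gt (|a| + 1)
    filter_upwards [eventually_ge_atTop m] with n hn
    have hn' : (m : ℝ) ≤ n := by exact_mod_cast hn
    have h1 : 0 < a + n + 1 := by linarith [neg_abs_le a]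
    have h2 : (0 : ℝ) < n := by linarith [abs_nonneg a]
    have h3 : (0 : ℝ) < n ^ a := by positivity
    rw [show a + 1 + n + 1 = (a + n + 1) + 1 by ring, Real.Gamma_add_one h1.ne',
      Real.rpow_add_one h2.ne', show a + 1 + (n : ℝ) = a + n + 1 by ring]
    field_simp

theorem tendsto_Gamma_add_nat (a : ℝ) :
    Tendsto (fun n : ℕ => Real.Gamma (a + n + 1) / (n.factorial * (n : ℝ) ^ a)) atTop (𝓝 1) := by
  obtain ⟨k, hk⟩ := exists_nat_gt (-a)
  exact tendsto_Gamma_add_nat_sub k a (by linarith)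

/-- The ratio `Γ(a+n)/Γ(b+n)` is asymptotic to `n^(a-b)`. -/
theorem tendsto_Gamma_ratio (a b : ℝ) :
    Tendsto (fun n : ℕ => Real.Gamma (a + n) / Real.Gamma (b + n) * ((n : ℝ) + 1) ^ (b - a))
      atTop (𝓝 1) := by
  have h1 := (tendsto_Gamma_add_nat (a - 1)).div (tendsto_Gamma_add_nat (b - 1)) one_ne_zero
  have h2 : Tendsto (fun n : ℕ => ((n : ℝ) / (1 + n)) ^ (a - b)) atTop (𝓝 1) := by
    have := (tendsto_nat_div_add 1).rpow_const (p := a - b) (Or.inl one_ne_zero)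
    simpa using this
  have h := h1.mul h2
  rw [div_one, one_mul] at h
  refine h.congr' ?_
  filter_upwards [eventually_ge_atTop 1] with n hn
  have hn : (0 : ℝ) < n := by exact_mod_cast hn
  have hf : (n.factorial : ℝ) ≠ 0 := by positivity
  simp only [Pi.div_apply]
  rw [Real.div_rpow hn.le (by positivity), show a - 1 + (n : ℝ) + 1 = a + n by ring,
    show b - 1 + (n : ℝ) + 1 = b + n by ring, show a - b = (a - 1) - (b - 1) by ring,
    Real.rpow_sub hn (a - 1) (b - 1), show b - a = -((a - 1) - (b - 1)) by ring,
    Real.rpow_neg (by positivity), add_comm 1 (n : ℝ)]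
  have hp : (0 : ℝ) < n ^ (a - 1) := by positivity
  have hq : (0 : ℝ) < n ^ (b - 1) := by positivity
  generalize (n : ℝ) ^ (a - 1) = p at *
  generalize (n : ℝ) ^ (b - 1) = q at *
  generalize ((n : ℝ) + 1) ^ (a - 1 - (b - 1)) = r at *
  field_simp

theorem Gamma_ratio_bounded (a b : ℝ) :
    ∃ C, 0 < C ∧ ∀ n : ℕ,
      |Real.Gamma (a + n) / Real.Gamma (b + n)| ≤ C * ((n : ℝ) + 1) ^ (a - b) := by
  obtain ⟨C, hC⟩ := (tendsto_Gamma_ratio a b).norm.bddAbove_range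
  refine ⟨max C 1, by positivity, fun n => ?_⟩
  have h := hC ⟨n, rfl⟩
  have hp : (0 : ℝ) < ((n : ℝ) + 1) ^ (b - a) := by positivity
  simp only [norm_mul, Real.norm_eq_abs, abs_of_pos hp] at h
  rw [show a - b = -(b - a) by ring, Real.rpow_neg (by positivity), ← div_eq_mul_inv,
    le_div_iff₀ hp]
  exact h.trans (le_max_left _ _)

theorem summable_of_abs_le_rpow {u : ℕ → ℝ} {C s : ℝ} (hs : s < -1)
    (h : ∀ n, |u n| ≤ C * ((n : ℝ) + 1) ^ s) : Summable u := by
  have h1 : Summable fun n : ℕ => ((n : ℝ) + 1) ^ s := by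
    have := (summable_nat_add_iff 1).2 (Real.summable_nat_rpow.2 hs)
    simpa using this
  exact Summable.of_norm_bounded (h1.mul_left C) h

theorem tendsto_rpow_add_one_neg {s : ℝ} (hs : s < 0) :
    Tendsto (fun n : ℕ => ((n : ℝ) + 1) ^ s) atTop (𝓝 0) := by
  have := (tendsto_rpow_neg_atTop (y := -s) (by linarith)).comp
    (tendsto_natCast_atTop_atTop (R := ℝ).atTop_add (tendsto_const_nhds (x := (1 : ℝ))))
  simpa [Function.comp_def] using this

theorem tendsto_zero_of_abs_le_rpow {u : ℕ → ℝ} {C s : ℝ} (hs : s < 0)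
    (h : ∀ n, |u n| ≤ C * ((n : ℝ) + 1) ^ s) : Tendsto u atTop (𝓝 0) := by
  refine squeeze_zero_norm h ?_
  simpa using (tendsto_rpow_add_one_neg hs).const_mul C

theorem Gamma_ratio_mul_bounded (a b c d : ℝ) :
    ∃ C, 0 < C ∧ ∀ n : ℕ,
      |Real.Gamma (a + n) / Real.Gamma (b + n) * (Real.Gamma (c + n) / Real.Gamma (d + n))|
        ≤ C * ((n : ℝ) + 1) ^ (a - b + (c - d)) := by
  obtain ⟨C, hC, h⟩ := Gamma_ratio_bounded a b
  obtain ⟨D, hD, h'⟩ := Gamma_ratio_bounded c d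
  refine ⟨C * D, by positivity, fun n => ?_⟩
  rw [abs_mul, Real.rpow_add (by positivity)]
  calc _ ≤ (C * ((n : ℝ) + 1) ^ (a - b)) * (D * ((n : ℝ) + 1) ^ (c - d)) :=
        mul_le_mul (h n) (h' n) (abs_nonneg _) (by positivity)
    _ = _ := by ring

/-- Products of two Gamma ratios of total order below `-1` are summable. -/
theorem summable_Gamma_ratio_mul (a b c d : ℝ) (h : a - b + (c - d) < -1) :
    Summable fun n : ℕ =>
      Real.Gamma (a + n) / Real.Gamma (b + n) * (Real.Gamma (c + n) / Real.Gamma (d + n)) := by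
  obtain ⟨C, -, hC⟩ := Gamma_ratio_mul_bounded a b c d
  exact summable_of_abs_le_rpow h hC

/-- A regularity (Toeplitz) lemma: averaging a sequence tending to `1` against
uniformly absolutely summable weights. -/
theorem tendsto_tsum_mul_of_tendsto_one {a : ℕ → ℕ → ℝ} {c : ℕ → ℝ} {L M : ℝ}
    (hs : ∀ᶠ n in atTop, Summable (a n))
    (hM : ∀ᶠ n in atTop, ∑' j, |a n j| ≤ M)
    (h0 : ∀ j, Tendsto (fun n => a n j) atTop (𝓝 0))
    (hL : Tendsto (fun n => ∑' j, a n j) atTop (𝓝 L))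
    (hc : Tendsto c atTop (𝓝 1)) :
    Tendsto (fun n => ∑' j, c j * a n j) atTop (𝓝 L) := by
  have hM0 : 0 ≤ M := by
    obtain ⟨n, hn⟩ := hM.exists
    exact (tsum_nonneg fun j => abs_nonneg (a n j)).trans hn
  obtain ⟨B, hB⟩ := (hc.sub_const 1).norm.bddAbove_range
  have hB' : ∀ j, |c j - 1| ≤ B := fun j => hB ⟨j, rfl⟩
  have key : Tendsto (fun n => ∑' j, (c j - 1) * a n j) atTop (𝓝 0) := by
    rw [Metric.tendsto_atTop']
    intro ε hε
    obtain ⟨J, hJ⟩ : ∃ J, ∀ j ≥ J, |c j - 1| < ε / (2 * (M + 1)) := by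
      have := (Metric.tendsto_atTop.1 hc) (ε / (2 * (M + 1))) (by positivity)
      simpa [Real.dist_eq] using this
    have hfin : Tendsto (fun n => ∑ j ∈ Finset.range J, (c j - 1) * a n j) atTop (𝓝 0) := by
      have := tendsto_finsetSum (Finset.range J) fun j _ => (h0 j).const_mul (c j - 1)
      simpa using this
    have hfin' := (Metric.tendsto_nhds.1 hfin) (ε / 2) (by positivity)
    obtain ⟨N, hN⟩ := eventually_atTop.1 (hs.and (hM.and hfin'))
    refine ⟨N, fun n hn => ?_⟩
    obtain ⟨hsn, hMn, hfn⟩ := hN n hn.le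
    have hsabs : Summable fun j => |a n j| := hsn.abs
    have hsum : Summable fun j => (c j - 1) * a n j := by
      refine Summable.of_norm_bounded (hsabs.mul_left B) fun j => ?_
      rw [Real.norm_eq_abs, abs_mul]
      exact mul_le_mul_of_nonneg_right (hB' j) (abs_nonneg _)
    rw [← hsum.sum_add_tsum_nat_add J]
    have htail : |∑' j, (c (j + J) - 1) * a n (j + J)| ≤ ε / (2 * (M + 1)) * M := by
      have hst := (summable_nat_add_iff J).2 hsabs
      have hb : ∀ j, ‖(c (j + J) - 1) * a n (j + J)‖ ≤ ε / (2 * (M + 1)) * |a n (j + J)| := by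
        intro j
        rw [Real.norm_eq_abs, abs_mul]
        exact mul_le_mul_of_nonneg_right (hJ _ (by omega)).le (abs_nonneg _)
      have := tsum_of_norm_bounded (hst.mul_left (ε / (2 * (M + 1)))).hasSum hb
      rw [Real.norm_eq_abs, tsum_mul_left] at this
      refine this.trans (mul_le_mul_of_nonneg_left ?_ (by positivity))
      refine le_trans ?_ hMn
      rw [← hsabs.sum_add_tsum_nat_add J]
      have : 0 ≤ ∑ j ∈ Finset.range J, |a n j| := Finset.sum_nonneg fun _ _ => abs_nonneg _
      linarith
    rw [dist_zero_right, Real.norm_eq_abs] at hfn ⊢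
    have h4 : ε / (2 * (M + 1)) * M < ε / 2 := by
      rw [div_mul_eq_mul_div, div_lt_div_iff₀ (by positivity) (by positivity)]
      nlinarith
    exact (abs_add_le _ _).trans_lt (by linarith)
  have h := key.add hL
  rw [zero_add] at h
  refine h.congr' ?_
  filter_upwards [hs] with n hsn
  have hsum : Summable fun j => (c j - 1) * a n j := by
    refine Summable.of_norm_bounded (hsn.abs.mul_left B) fun j => ?_
    rw [Real.norm_eq_abs, abs_mul]
    exact mul_le_mul_of_nonneg_right (hB' j) (abs_nonneg _)
  rw [← hsum.tsum_add hsn]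
  congr 1; ext j; ring

/-- Telescoping series. -/
theorem hasSum_of_eq_sub {u g : ℕ → ℝ} {l : ℝ} (hu : Summable u)
    (h : ∀ n, u n = g n - g (n + 1)) (hg : Tendsto g atTop (𝓝 l)) : ∑' n, u n = g 0 - l := by
  refine tendsto_nhds_unique hu.hasSum.tendsto_sum_nat ?_
  have : ∀ n, ∑ i ∈ Finset.range n, u i = g 0 - g n := by
    intro n
    simp_rw [h]
    exact Finset.sum_range_sub' g n
  simp_rw [this]
  exact tendsto_const_nhds.sub hg

/-- The kernel `Φ(y,j) = Γ(½+y)⁴ Γ(½+y+j)² / (Γ(1+2y) Γ(1+2y+j)²)`. -/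
noncomputable def wzKernel (y : ℝ) (j : ℕ) : ℝ :=
  Real.Gamma (1/2 + y) ^ 4 / Real.Gamma (1 + 2 * y) *
    (Real.Gamma (1/2 + y + j) / Real.Gamma (1 + 2 * y + j)) ^ 2

/-- The numerator polynomial of the certificate, in terms of `h = ½ + y`. -/
noncomputable def wzNum (h j : ℝ) : ℝ :=
  j ^ 3 + (13 * h / 2 - 1) * j ^ 2 + (14 * h ^ 2 - 4 * h) * j + h ^ 2 * (21 * h - 8) / 2

/-- First component of the telescoping pair. -/
noncomputable def wzU (y : ℝ) (j : ℕ) : ℝ := 2 * y * wzKernel y j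

/-- Second component of the telescoping pair. -/
noncomputable def wzF (y : ℝ) (j : ℕ) : ℝ :=
  wzKernel y j * (wzNum (1/2 + y) j / (1 + 2 * y + j) ^ 2)

theorem wzKernel_pos {y : ℝ} (hy : 0 < y) (j : ℕ) : 0 < wzKernel y j := by
  have h1 := Real.Gamma_pos_of_pos (show 0 < 1/2 + y by positivity)
  have h2 := Real.Gamma_pos_of_pos (show 0 < 1 + 2 * y by positivity)
  have h3 := Real.Gamma_pos_of_pos (show 0 < 1/2 + y + j by positivity)
  have h4 := Real.Gamma_pos_of_pos (show 0 < 1 + 2 * y + j by positivity)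
  unfold wzKernel
  positivity

theorem wzNum_nonneg {h j : ℝ} (hh : 1/2 ≤ h) (hj : 0 ≤ j) : 0 ≤ wzNum h j := by
  unfold wzNum
  have h1 : 0 ≤ 13 * h / 2 - 1 := by linarith
  have h2 : 0 ≤ 14 * h ^ 2 - 4 * h := by nlinarith
  have h3 : 0 ≤ 21 * h - 8 := by linarith
  positivity

theorem wzF_nonneg {y : ℝ} (hy : 0 < y) (j : ℕ) : 0 ≤ wzF y j :=
  mul_nonneg (wzKernel_pos hy j).le
    (div_nonneg (wzNum_nonneg (by linarith) (Nat.cast_nonneg j)) (by positivity))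

theorem wzKernel_succ {y : ℝ} (hy : 0 < y) (j : ℕ) :
    wzKernel y (j + 1) = wzKernel y j * ((1/2 + y + j) / (1 + 2 * y + j)) ^ 2 := by
  unfold wzKernel
  have h3 : 0 < 1/2 + y + j := by positivity
  have h4 : 0 < 1 + 2 * y + j := by positivity
  rw [Nat.cast_succ, ← add_assoc, ← add_assoc, Real.Gamma_add_one h3.ne', Real.Gamma_add_one h4.ne',
    mul_div_mul_comm]
  ring

theorem wzU_add_one {y : ℝ} (hy : 0 < y) (j : ℕ) :
    wzU (y + 1) j = wzKernel y j *
      ((1/2 + y) ^ 3 / 2 * (1/2 + y + j) ^ 2 / ((1 + 2 * y + j) ^ 2 * (2 + 2 * y + j) ^ 2)) := by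
  unfold wzU wzKernel
  have h1 : 0 < 1/2 + y := by positivity
  have h2 : 0 < 1 + 2 * y := by positivity
  have h3 : 0 < 1/2 + y + j := by positivity
  have h4 : 0 < 1 + 2 * y + j := by positivity
  rw [show 1/2 + (y + 1) = 1/2 + y + 1 by ring,
    show 1/2 + y + 1 + (j : ℝ) = 1/2 + y + j + 1 by ring,
    show 1 + 2 * (y + 1) = 1 + 2 * y + 1 + 1 by ring,
    show 1 + 2 * y + 1 + 1 + (j : ℝ) = 1 + 2 * y + j + 1 + 1 by ring,
    Real.Gamma_add_one h1.ne', Real.Gamma_add_one h3.ne', Real.Gamma_add_one (by positivity),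
    Real.Gamma_add_one h2.ne', Real.Gamma_add_one (s := 1 + 2 * y + j + 1) (by positivity),
    Real.Gamma_add_one h4.ne']
  have := Real.Gamma_pos_of_pos h1
  have := Real.Gamma_pos_of_pos h2
  have := Real.Gamma_pos_of_pos h3
  have := Real.Gamma_pos_of_pos h4
  have : 0 < 2 + 2 * y + j := by positivity
  have : 0 < 1 + 2 * y + j + 1 := by positivity
  generalize Real.Gamma (1/2 + y) = A at *
  generalize Real.Gamma (1/2 + y + j) = B at *
  generalize Real.Gamma (1 + 2 * y) = C at *
  generalize Real.Gamma (1 + 2 * y + j) = D at *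
  field_simp
  ring

/-- The telescoping (WZ) relation. -/
theorem wz_telescope {y : ℝ} (hy : 0 < y) (j : ℕ) :
    wzF y j - wzF y (j + 1) = wzU y j - wzU (y + 1) j := by
  rw [wzU_add_one hy, wzF, wzF, wzKernel_succ hy, wzU]
  have h4 : 0 < 1 + 2 * y + j := by positivity
  have h5 : 0 < 2 + 2 * y + j := by positivity
  have h6 : 1 + 2 * y + ((j + 1 : ℕ) : ℝ) = 2 + 2 * y + j := by push_cast; ring
  rw [h6]
  generalize wzKernel y j = K
  unfold wzNum
  push_cast
  field_simp
  ring

theorem wzU_add_one_le {y : ℝ} (hy : 1/2 ≤ y) (j : ℕ) : wzU (y + 1) j ≤ wzU y j / 8 := by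
  have hy0 : 0 < y := by linarith
  rw [wzU_add_one hy0, wzU]
  have hK := wzKernel_pos hy0 j
  have hj : (0 : ℝ) ≤ j := Nat.cast_nonneg j
  have h4 : 0 < 1 + 2 * y + j := by positivity
  have h5 : 0 < 2 + 2 * y + j := by positivity
  have key : (1/2 + y) ^ 3 / 2 * (1/2 + y + j) ^ 2 / ((1 + 2 * y + j) ^ 2 * (2 + 2 * y + j) ^ 2)
      ≤ 2 * y / 8 := by
    rw [div_le_iff₀ (by positivity)]
    have e1 : (1/2 + y + j) ^ 2 ≤ (1 + 2 * y + j) ^ 2 := by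
      apply pow_le_pow_left₀ (by positivity); linarith
    have e2 : (1 + 2 * y) ^ 2 ≤ (2 + 2 * y + j) ^ 2 := by
      apply pow_le_pow_left₀ (by positivity); linarith
    have e3 : (1/2 + y) ^ 3 / 2 ≤ 2 * y / 8 * (1 + 2 * y) ^ 2 := by
      have : 0 ≤ (1/2 + y) ^ 2 * (y - 1/2) := by
        apply mul_nonneg (by positivity); linarith
      nlinarith
    calc (1/2 + y) ^ 3 / 2 * (1/2 + y + j) ^ 2
        ≤ (2 * y / 8 * (2 + 2 * y + j) ^ 2) * (1 + 2 * y + j) ^ 2 := by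
          apply mul_le_mul _ e1 (by positivity) (by positivity)
          exact e3.trans (mul_le_mul_of_nonneg_left e2 (by positivity))
      _ = _ := by ring
  calc _ ≤ wzKernel y j * (2 * y / 8) := mul_le_mul_of_nonneg_left key hK.le
    _ = _ := by ring

theorem wzU_nonneg {y : ℝ} (hy : 0 < y) (j : ℕ) : 0 ≤ wzU y j :=
  mul_nonneg (by positivity) (wzKernel_pos hy j).le

theorem wzU_add_nat_le {y : ℝ} (hy : 1/2 ≤ y) (j n : ℕ) :
    wzU (y + n) j ≤ wzU y j * (1/8) ^ n := by
  induction n with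
  | zero => simp
  | succ n ih =>
    have h : 1/2 ≤ y + n := by linarith [(Nat.cast_nonneg n : (0 : ℝ) ≤ n)]
    rw [Nat.cast_succ, ← add_assoc, pow_succ]
    linarith [wzU_add_one_le h j]

theorem tendsto_wzU {x : ℝ} (hx : 0 < x) (j : ℕ) :
    Tendsto (fun n : ℕ => wzU (x + n) j) atTop (𝓝 0) := by
  rw [← tendsto_add_atTop_iff_nat 1]
  have h : Tendsto (fun n : ℕ => wzU (x + 1) j * (1/8 : ℝ) ^ n) atTop (𝓝 0) := by
    simpa using (tendsto_pow_atTop_nhds_zero_of_lt_one (r := (1/8 : ℝ)) (by norm_num)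
      (by norm_num)).const_mul (wzU (x + 1) j)
  refine squeeze_zero (fun n => wzU_nonneg (by positivity) j) (fun n => ?_) h
  have := wzU_add_nat_le (y := x + 1) (by linarith) j n
  rwa [show x + ((n + 1 : ℕ) : ℝ) = x + 1 + n by push_cast; ring]

theorem wzF_anti {y : ℝ} (hy : 1/2 ≤ y) (j : ℕ) : wzF y (j + 1) ≤ wzF y j := by
  have hy0 : 0 < y := by linarith
  linarith [wz_telescope hy0 j, wzU_add_one_le hy j, wzU_nonneg hy0 j]

theorem wzF_le_zero_index {y : ℝ} (hy : 1/2 ≤ y) (j : ℕ) : wzF y j ≤ wzF y 0 := by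
  induction j with
  | zero => exact le_rfl
  | succ j ih => exact (wzF_anti hy j).trans ih

theorem wzF_zero {y : ℝ} (hy : 0 < y) : wzF y 0 = wzKernel y 0 * ((42 * y + 5) / 16) := by
  unfold wzF wzNum
  congr 1
  have : 0 < 1 + 2 * y := by positivity
  simp only [Nat.cast_zero, add_zero]
  field_simp
  ring

theorem wzF_zero_le {y : ℝ} (hy : 1/2 ≤ y) : wzF y 0 ≤ 3 * wzU y 0 := by
  have hy0 : 0 < y := by linarith
  rw [wzF_zero hy0, wzU]
  have hK := wzKernel_pos hy0 0
  nlinarith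

theorem summable_wzF_zero {x : ℝ} (hx : 0 < x) : Summable fun n : ℕ => wzF (x + 1 + n) 0 := by
  have hg : Summable fun n : ℕ => 3 * wzU (x + 1) 0 * (1/8 : ℝ) ^ n :=
    (summable_geometric_of_lt_one (by norm_num) (by norm_num)).mul_left _
  refine Summable.of_nonneg_of_le (fun n => wzF_nonneg (by positivity) 0) (fun n => ?_) hg
  have hn : (0 : ℝ) ≤ n := Nat.cast_nonneg n
  have := wzF_zero_le (y := x + 1 + n) (by linarith)
  have := wzU_add_nat_le (y := x + 1) (by linarith) 0 n
  linarith

theorem summable_wzF {x : ℝ} (hx : 0 < x) (J : ℕ) : Summable fun n : ℕ => wzF (x + n) J := by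
  rw [← summable_nat_add_iff 1]
  refine Summable.of_nonneg_of_le (fun n => wzF_nonneg (by positivity) J) (fun n => ?_)
    (summable_wzF_zero hx)
  have hn : (0 : ℝ) ≤ n := Nat.cast_nonneg n
  rw [show x + ((n + 1 : ℕ) : ℝ) = x + 1 + n by push_cast; ring]
  exact wzF_le_zero_index (by linarith) J

theorem tendsto_wzF {y : ℝ} (hy : 0 < y) : Tendsto (fun J : ℕ => wzF y J) atTop (𝓝 0) := by
  obtain ⟨C, hC, h⟩ := Gamma_ratio_mul_bounded (1/2 + y) (1 + 2 * y) (1/2 + y) (1 + 2 * y)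
  have h2 := Real.Gamma_pos_of_pos (show 0 < 1 + 2 * y by positivity)
  have h1 := Real.Gamma_pos_of_pos (show 0 < 1/2 + y by positivity)
  set A := Real.Gamma (1/2 + y) ^ 4 / Real.Gamma (1 + 2 * y) with hA
  have hA0 : 0 < A := by positivity
  refine tendsto_zero_of_abs_le_rpow (C := A * C * (4 + 3 * (1/2 + y))) (s := -(2 * y))
    (by linarith) fun J => ?_
  have hJ : (0 : ℝ) ≤ J := Nat.cast_nonneg J
  have h4 : 0 < 1 + 2 * y + J := by positivity
  rw [abs_of_nonneg (wzF_nonneg hy J), wzF]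
  have e1 : wzKernel y J ≤ A * (C * ((J : ℝ) + 1) ^ (-(2 * y) + -1)) := by
    rw [wzKernel, ← hA]
    apply mul_le_mul_of_nonneg_left _ hA0.le
    have := (le_abs_self _).trans (h J)
    rw [← sq] at this
    refine this.trans (le_of_eq ?_)
    congr 2; ring
  have e2 : wzNum (1/2 + y) J / (1 + 2 * y + J) ^ 2 ≤ (4 + 3 * (1/2 + y)) * (J + 1) := by
    rw [div_le_iff₀ (by positivity), wzNum]
    have hJ2 : (0 : ℝ) ≤ (J : ℝ) ^ 2 := by positivity
    have hJ3 : (0 : ℝ) ≤ (J : ℝ) ^ 3 := by positivity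
    rw [← sub_nonneg]
    have : 0 ≤ y ^ 3 := by positivity
    ring_nf
    positivity
  calc _ ≤ (A * (C * ((J : ℝ) + 1) ^ (-(2 * y) + -1))) * ((4 + 3 * (1/2 + y)) * (J + 1)) := by
        apply mul_le_mul e1 e2 _ (by positivity)
        exact div_nonneg (wzNum_nonneg (by linarith) hJ) (by positivity)
    _ = _ := by
      rw [Real.rpow_add (by positivity), Real.rpow_neg_one]
      field_simp

theorem tendsto_tsum_wzF {x : ℝ} (hx : 0 < x) :
    Tendsto (fun J : ℕ => ∑' n : ℕ, wzF (x + n) J) atTop (𝓝 0) := by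
  have h1 : Tendsto (fun J : ℕ => ∑' n : ℕ, wzF (x + 1 + n) J) atTop (𝓝 (∑' _ : ℕ, (0 : ℝ))) := by
    refine tendsto_tsum_of_dominated_convergence (summable_wzF_zero hx)
      (fun n => tendsto_wzF (by positivity)) (Eventually.of_forall fun J n => ?_)
    have hn : (0 : ℝ) ≤ n := Nat.cast_nonneg n
    rw [Real.norm_of_nonneg (wzF_nonneg (by positivity) J)]
    exact wzF_le_zero_index (by linarith) J
  have h := (tendsto_wzF hx).add h1
  rw [tsum_zero, add_zero] at h
  refine h.congr fun J => ?_
  rw [(summable_wzF hx J).tsum_eq_zero_add]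
  congr 1
  · simp
  · congr 1; ext n; congr 1; push_cast; ring

theorem tsum_wzF_sub {x : ℝ} (hx : 0 < x) (J : ℕ) :
    ∑' n : ℕ, wzF (x + n) 0 - ∑' n : ℕ, wzF (x + n) J = ∑ j ∈ Finset.range J, wzU x j := by
  induction J with
  | zero => simp
  | succ J ih =>
    rw [Finset.sum_range_succ, ← ih]
    have h : ∑' n : ℕ, (wzF (x + n) J - wzF (x + n) (J + 1)) = wzU x J - 0 := by
      have := hasSum_of_eq_sub (g := fun n : ℕ => wzU (x + n) J)
        ((summable_wzF hx J).sub (summable_wzF hx (J + 1))) (fun n => ?_) (tendsto_wzU hx J)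
      · simpa using this
      · simp only [wz_telescope (show 0 < x + n by positivity) J, Nat.cast_succ, add_assoc]
    rw [(summable_wzF hx J).tsum_sub (summable_wzF hx (J + 1))] at h
    linarith

theorem tsum_wzF_eq {x : ℝ} (hx : 0 < x) :
    ∑' n : ℕ, wzF (x + n) 0 = ∑' j : ℕ, wzU x j := by
  have hs : Summable fun j : ℕ => wzU x j := by
    have := summable_Gamma_ratio_mul (1/2 + x) (1 + 2 * x) (1/2 + x) (1 + 2 * x) (by linarith)
    refine (this.mul_left (2 * x * (Real.Gamma (1/2 + x) ^ 4 / Real.Gamma (1 + 2 * x)))).congr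
      fun j => ?_
    unfold wzU wzKernel
    ring
  refine tendsto_nhds_unique ?_ hs.hasSum.tendsto_sum_nat
  simp_rw [← tsum_wzF_sub hx]
  simpa using tendsto_const_nhds.sub (tendsto_tsum_wzF hx)

theorem wzKernel_zero {y : ℝ} (hy : 0 < y) :
    wzKernel y 0 = Real.pi ^ 3 *
      ((2 : ℝ) ^ (-(6 : ℝ) * y) * (pochG (1/2) y / pochG 1 y) ^ 3) := by
  have hd := Real.Gamma_mul_Gamma_add_half (1/2 + y)
  rw [show 1/2 + y + 1/2 = 1 + y by ring, show 2 * (1/2 + y) = 1 + 2 * y by ring,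
    show 1 - (1 + 2 * y) = -(2 * y) by ring] at hd
  have h1 := Real.Gamma_pos_of_pos (show 0 < 1/2 + y by positivity)
  have h2 := Real.Gamma_pos_of_pos (show 0 < 1 + 2 * y by positivity)
  have h3 := Real.Gamma_pos_of_pos (show 0 < 1 + y by positivity)
  have h6 : (2 : ℝ) ^ (-(6 : ℝ) * y) = ((2 : ℝ) ^ (-(2 * y))) ^ 3 := by
    rw [← Real.rpow_natCast, ← Real.rpow_mul (by norm_num)]
    congr 1; push_cast; ring
  have hpi : Real.pi = √Real.pi ^ 2 := (Real.sq_sqrt Real.pi_pos.le).symm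
  have hsp : 0 < √Real.pi := Real.sqrt_pos.2 Real.pi_pos
  rw [h6, wzKernel, pochG, pochG, Real.Gamma_one_half_eq, Real.Gamma_one]
  simp only [Nat.cast_zero, add_zero]
  conv_rhs => rw [hpi]
  have h7 : (0 : ℝ) < 2 ^ (-(2 * y)) := by positivity
  generalize (2 : ℝ) ^ (-(2 * y)) = p at *
  generalize √Real.pi = q at *
  generalize Real.Gamma (1/2 + y) = A at *
  generalize Real.Gamma (1 + y) = B at *
  generalize Real.Gamma (1 + 2 * y) = C at *
  have : C = A * B / (p * q) := by field_simp; linarith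
  rw [this]
  have hq : √(q ^ 2) = q := Real.sqrt_sq hsp.le
  simp only [hq]
  field_simp

/-- The original series as a series of squares of Gamma ratios. -/
theorem series_eq_tsum_sq {x : ℝ} (hx : 0 < x) :
    (1/16 : ℝ) * (∑' n : ℕ,
          (2 : ℝ) ^ (-(6 : ℝ) * ((n : ℝ) + x)) *
            (pochG (1/2) ((n : ℝ) + x) / pochG 1 ((n : ℝ) + x)) ^ 3 *
            (42 * ((n : ℝ) + x) + 5)) =
      Real.Gamma (1/2 + x) ^ 4 / (Real.pi ^ 3 * Real.Gamma (2 * x)) *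
        ∑' j : ℕ, (Real.Gamma (1/2 + x + j) / Real.Gamma (1 + 2 * x + j)) ^ 2 := by
  have h := tsum_wzF_eq hx
  have h2 := Real.Gamma_pos_of_pos (show 0 < 2 * x by positivity)
  have e1 : ∀ n : ℕ, wzF (x + n) 0 = Real.pi ^ 3 * (1/16) *
      ((2 : ℝ) ^ (-(6 : ℝ) * ((n : ℝ) + x)) *
            (pochG (1/2) ((n : ℝ) + x) / pochG 1 ((n : ℝ) + x)) ^ 3 *
            (42 * ((n : ℝ) + x) + 5)) := by
    intro n
    have hy : 0 < x + n := by positivity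
    rw [wzF_zero hy, wzKernel_zero hy, add_comm x]
    ring
  have e2 : ∀ j : ℕ, wzU x j = Real.Gamma (1/2 + x) ^ 4 / Real.Gamma (2 * x) *
      (Real.Gamma (1/2 + x + j) / Real.Gamma (1 + 2 * x + j)) ^ 2 := by
    intro j
    rw [wzU, wzKernel, add_comm 1 (2 * x), Real.Gamma_add_one (by positivity)]
    field_simp
  simp_rw [e1, e2] at h
  rw [tsum_mul_left, tsum_mul_left] at h
  have hpi := Real.pi_pos
  rw [div_mul_eq_div_div_swap, div_mul_eq_mul_div _ (Real.pi ^ 3), ← h,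
    eq_div_iff (by positivity)]
  ring

/-- Terms of the (Gamma-normalised) Gauss hypergeometric series at `1`. -/
noncomputable def gaussTerm (A B C : ℝ) (j : ℕ) : ℝ :=
  Real.Gamma (A + j) / Real.Gamma (C + j) * (Real.Gamma (B + j) / Real.Gamma (1 + j))

theorem summable_gaussTerm {A B C : ℝ} (h : 0 < C - A - B) : Summable (gaussTerm A B C) :=
  summable_Gamma_ratio_mul A C B 1 (by linarith)

theorem tendsto_nat_mul_gaussTerm {A B C : ℝ} (h : 0 < C - A - B) :
    Tendsto (fun j : ℕ => j * gaussTerm A B C j) atTop (𝓝 0) := by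
  obtain ⟨K, hK, hb⟩ := Gamma_ratio_mul_bounded A C B 1
  refine tendsto_zero_of_abs_le_rpow (C := K) (s := A + B - C) (by linarith) fun j => ?_
  have hj : (0 : ℝ) ≤ j := Nat.cast_nonneg j
  rw [abs_mul, abs_of_nonneg hj]
  calc (j : ℝ) * |gaussTerm A B C j| ≤ (j + 1) * (K * ((j : ℝ) + 1) ^ (A - C + (B - 1))) :=
        mul_le_mul (by linarith) (hb j) (abs_nonneg _) (by positivity)
    _ = K * ((j : ℝ) + 1) ^ (A + B - C) := by
      rw [show A + B - C = A - C + (B - 1) + 1 by ring, Real.rpow_add_one (by positivity)]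
      ring

theorem gaussTerm_recurrence {A B C : ℝ} (hA : ∀ m : ℕ, A + m ≠ 0) (hB : ∀ m : ℕ, B + m ≠ 0)
    (hC : ∀ m : ℕ, C + m ≠ 0) (j : ℕ) :
    (C - A - B) * gaussTerm A B C j - (C - A) * (C - B) * gaussTerm A B (C + 1) j =
      j * gaussTerm A B C j - (j + 1 : ℕ) * gaussTerm A B C (j + 1) := by
  have h1 : (1 + j : ℝ) ≠ 0 := by positivity
  have hC' := hC j
  unfold gaussTerm
  rw [show C + 1 + (j : ℝ) = C + j + 1 by ring, Nat.cast_succ, ← add_assoc, ← add_assoc,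
    ← add_assoc, ← add_assoc, Real.Gamma_add_one (hA j), Real.Gamma_add_one (hB j),
    Real.Gamma_add_one hC', Real.Gamma_add_one h1]
  simp only [div_eq_mul_inv, mul_inv]
  generalize (Real.Gamma (C + j))⁻¹ = c
  generalize (Real.Gamma (1 + j))⁻¹ = d
  field_simp
  ring

theorem tsum_gaussTerm_recurrence {A B C : ℝ} (hA : ∀ m : ℕ, A + m ≠ 0) (hB : ∀ m : ℕ, B + m ≠ 0)
    (hC : ∀ m : ℕ, C + m ≠ 0) (h : 0 < C - A - B) :
    (C - A - B) * ∑' j, gaussTerm A B C j =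
      (C - A) * (C - B) * ∑' j, gaussTerm A B (C + 1) j := by
  have s1 := (summable_gaussTerm h).mul_left (C - A - B)
  have s2 := (summable_gaussTerm (A := A) (B := B) (C := C + 1) (by linarith)).mul_left
    ((C - A) * (C - B))
  have := hasSum_of_eq_sub (s1.sub s2) (gaussTerm_recurrence hA hB hC) (tendsto_nat_mul_gaussTerm h)
  rw [s1.tsum_sub s2, tsum_mul_left, tsum_mul_left] at this
  simp at this
  linarith

theorem tsum_gaussTerm_shift {A B C : ℝ} (hA : ∀ m : ℕ, A + m ≠ 0) (hB : ∀ m : ℕ, B + m ≠ 0)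
    (hC : ∀ m : ℕ, C + m ≠ 0) (hCA : ∀ m : ℕ, C - A + m ≠ 0) (hCB : ∀ m : ℕ, C - B + m ≠ 0)
    (h : 0 < C - A - B) (N : ℕ) :
    (∑' j, gaussTerm A B (C + N) j) * (Real.Gamma (C - A + N) * Real.Gamma (C - B + N) /
        Real.Gamma (C - A - B + N)) =
      (∑' j, gaussTerm A B C j) * (Real.Gamma (C - A) * Real.Gamma (C - B) /
        Real.Gamma (C - A - B)) := by
  induction N with
  | zero => simp
  | succ N ih =>
    rw [← ih]
    have hp : 0 < C - A - B + N := by positivity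
    have hr := tsum_gaussTerm_recurrence (C := C + N) hA hB
      (fun m => by have := hC (N + m); push_cast at this; rwa [← add_assoc] at this)
      (by linarith)
    rw [Nat.cast_succ, ← add_assoc, ← add_assoc, ← add_assoc, ← add_assoc,
      Real.Gamma_add_one (hCA N), Real.Gamma_add_one (hCB N), Real.Gamma_add_one hp.ne']
    have hG := Real.Gamma_pos_of_pos hp
    rw [show C + (N : ℝ) - A - B = C - A - B + N by ring, show C + (N : ℝ) - A = C - A + N by ring,
      show C + (N : ℝ) - B = C - B + N by ring] at hr
    generalize ∑' j, gaussTerm A B (C + N + 1) j = S at *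
    generalize ∑' j, gaussTerm A B (C + N) j = T at *
    field_simp
    linear_combination -Real.Gamma (C - A + N) * Real.Gamma (C - B + N) * hr

theorem Gamma_div_Gamma_add_nat_antitone {c d : ℝ} (hc : 0 < c) (hcd : c ≤ d) (j : ℕ) :
    Real.Gamma d / Real.Gamma (d + j) ≤ Real.Gamma c / Real.Gamma (c + j) := by
  have hd : 0 < d := hc.trans_le hcd
  have h1 := Real.Gamma_pos_of_pos hc
  have h2 := Real.Gamma_pos_of_pos hd
  rw [Gamma_add_nat_eq_prod c hc, Gamma_add_nat_eq_prod d hd, div_mul_cancel_right₀ h1.ne',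
    div_mul_cancel_right₀ h2.ne']
  apply inv_anti₀
  · exact Finset.prod_pos fun i _ => by positivity
  · exact Finset.prod_le_prod (fun i _ => by positivity) fun i _ => by linarith

theorem tendsto_Gamma_mul_tsum_gaussTerm {A B C : ℝ} (h : 0 < C - A - B) :
    Tendsto (fun N : ℕ => Real.Gamma (C + N) * ∑' j, gaussTerm A B (C + N) j) atTop
      (𝓝 (Real.Gamma A * Real.Gamma B)) := by
  obtain ⟨N₀, hN₀⟩ := exists_nat_gt (-C)
  have hpos : 0 < C + N₀ := by linarith
  have e : ∀ N j : ℕ, Real.Gamma (C + N) * gaussTerm A B (C + N) j =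
      Real.Gamma (C + N) / Real.Gamma (C + N + j) *
        (Real.Gamma (A + j) * (Real.Gamma (B + j) / Real.Gamma (1 + j))) := by
    intro N j; unfold gaussTerm; ring
  simp_rw [← tsum_mul_left]
  have hlim : Real.Gamma A * Real.Gamma B =
      ∑' j : ℕ, if j = 0 then Real.Gamma A * Real.Gamma B else 0 := by simp
  rw [hlim]
  refine tendsto_tsum_of_dominated_convergence
    (bound := fun j => |Real.Gamma (C + N₀) * gaussTerm A B (C + N₀) j|)
    (((summable_gaussTerm (by linarith [(Nat.cast_nonneg N₀ : (0 : ℝ) ≤ N₀)])).mul_left _).abs)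
    (fun j => ?_) ?_
  · simp_rw [e]
    split_ifs with hj
    · subst hj
      refine tendsto_const_nhds.congr' ?_
      filter_upwards [eventually_ge_atTop N₀] with N hN
      have hN' : (N₀ : ℝ) ≤ N := by exact_mod_cast hN
      have := Real.Gamma_pos_of_pos (show 0 < C + N by linarith)
      simp [this.ne']
    · have hj' : (1 : ℝ) ≤ j := by exact_mod_cast Nat.one_le_iff_ne_zero.2 hj
      obtain ⟨K, hK, hb⟩ := Gamma_ratio_bounded C (C + j)
      have : Tendsto (fun N : ℕ => Real.Gamma (C + N) / Real.Gamma (C + N + j)) atTop (𝓝 0) := by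
        refine tendsto_zero_of_abs_le_rpow (s := C - (C + j)) (C := K) (by linarith) fun N => ?_
        have := hb N
        rwa [show C + (j : ℝ) + N = C + N + j by ring] at this
      simpa using this.mul_const _
  · filter_upwards [eventually_ge_atTop N₀] with N hN j
    have hN' : (N₀ : ℝ) ≤ N := by exact_mod_cast hN
    rw [e, e, Real.norm_eq_abs, abs_mul, abs_mul (Real.Gamma (C + N₀) / _)]
    apply mul_le_mul_of_nonneg_right _ (abs_nonneg _)
    have h1 := Real.Gamma_pos_of_pos hpos
    have h2 := Real.Gamma_pos_of_pos (show 0 < C + N₀ + j by positivity)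
    have h3 := Real.Gamma_pos_of_pos (show 0 < C + N by linarith)
    have h4 := Real.Gamma_pos_of_pos
      (show 0 < C + N + j by linarith [(Nat.cast_nonneg j : (0 : ℝ) ≤ j)])
    rw [abs_of_pos (by positivity), abs_of_pos (by positivity)]
    exact Gamma_div_Gamma_add_nat_antitone hpos (by linarith) j

/-- Gauss's summation theorem. -/
theorem tsum_gaussTerm {A B C : ℝ} (hA : ∀ m : ℕ, A + m ≠ 0) (hB : ∀ m : ℕ, B + m ≠ 0)
    (hC : ∀ m : ℕ, C + m ≠ 0) (hCA : ∀ m : ℕ, C - A + m ≠ 0) (hCB : ∀ m : ℕ, C - B + m ≠ 0)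
    (h : 0 < C - A - B) :
    (∑' j, gaussTerm A B C j) * (Real.Gamma (C - A) * Real.Gamma (C - B) /
        Real.Gamma (C - A - B)) = Real.Gamma A * Real.Gamma B := by
  have h1 := tendsto_Gamma_mul_tsum_gaussTerm h
  have h2 := (tendsto_Gamma_ratio (C - A) C).mul (tendsto_Gamma_ratio (C - B) (C - A - B))
  have h3 := h1.mul h2
  rw [one_mul, mul_one] at h3
  refine tendsto_nhds_unique (tendsto_const_nhds.congr' ?_) h3
  obtain ⟨N₀, hN₀⟩ := exists_nat_gt (-C)
  filter_upwards [eventually_ge_atTop N₀] with N hN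
  have hN' : (N₀ : ℝ) ≤ N := by exact_mod_cast hN
  have hG := Real.Gamma_pos_of_pos (show 0 < C + N by linarith)
  rw [← tsum_gaussTerm_shift hA hB hC hCA hCB h N,
    show C - A - B - (C - B) = -(C - (C - A)) by ring, Real.rpow_neg (by positivity)]
  have : (0 : ℝ) < ((N : ℝ) + 1) ^ (C - (C - A)) := by positivity
  generalize ((N : ℝ) + 1) ^ (C - (C - A)) = p at *
  generalize ∑' j, gaussTerm A B (C + N) j = T at *
  field_simp

theorem add_int_ne_zero {r : ℝ} (h0 : 0 < r) (h1 : r < 1) (k : ℤ) : r + k ≠ 0 := by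
  intro h
  have h2 : (-1 : ℝ) < k := by linarith
  have h3 : (k : ℝ) < 0 := by linarith
  have h4 : (-1 : ℤ) < k := by exact_mod_cast h2
  have h5 : k < 0 := by exact_mod_cast h3
  omega

/-- The reflection formula in ratio form. -/
theorem Gamma_sub_nat_div {s t : ℝ} (hs : Real.sin (Real.pi * s) ≠ 0)
    (ht : Real.sin (Real.pi * t) ≠ 0) (n : ℕ) :
    Real.Gamma (s - n) / Real.Gamma (t - n) =
      Real.sin (Real.pi * t) / Real.sin (Real.pi * s) *
        (Real.Gamma (1 - t + n) / Real.Gamma (1 - s + n)) := by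
  have e : ∀ r : ℝ, Real.Gamma (r - n) * Real.Gamma (1 - r + n) =
      Real.pi / ((-1) ^ n * Real.sin (Real.pi * r)) := by
    intro r
    have := Real.Gamma_mul_Gamma_one_sub (r - n)
    rw [show 1 - (r - (n : ℝ)) = 1 - r + n by ring,
      show Real.pi * (r - n) = Real.pi * r - n * Real.pi by ring, Real.sin_sub_nat_mul_pi] at this
    exact this
  have hpi := Real.pi_ne_zero
  have h1 : (-1 : ℝ) ^ n ≠ 0 := by simp
  have hs' : Real.Gamma (s - n) * Real.Gamma (1 - s + n) ≠ 0 := by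
    rw [e]; positivity
  have ht' : Real.Gamma (t - n) * Real.Gamma (1 - t + n) ≠ 0 := by
    rw [e]; positivity
  have es := e s
  have et := e t
  obtain ⟨a1, a2⟩ := mul_ne_zero_iff.1 hs'
  obtain ⟨b1, b2⟩ := mul_ne_zero_iff.1 ht'
  rw [eq_div_iff (by positivity)] at es et
  have key : Real.pi * (-1) ^ n *
        (Real.Gamma (s - n) * Real.sin (Real.pi * s) * Real.Gamma (1 - s + n)) =
      Real.pi * (-1) ^ n *
        (Real.Gamma (t - n) * Real.sin (Real.pi * t) * Real.Gamma (1 - t + n)) := by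
    linear_combination Real.pi * es - Real.pi * et
  replace key := mul_left_cancel₀ (by positivity) key
  generalize Real.sin (Real.pi * s) = p at *
  generalize Real.sin (Real.pi * t) = q at *
  field_simp
  linarith

/-- The terms `Γ(½+x-n+j) Γ(½+x+j) / (Γ(1+2x-n+j) Γ(1+2x+j))`. -/
noncomputable def contigTerm (x : ℝ) (n j : ℕ) : ℝ :=
  Real.Gamma (1/2 + x - n + j) / Real.Gamma (1 + 2 * x - n + j) *
    (Real.Gamma (1/2 + x + j) / Real.Gamma (1 + 2 * x + j))

/-- The certificate for the contiguity relation between `contigTerm x n` and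
`contigTerm x (n+1)`. -/
noncomputable def contigCert (x : ℝ) (n j : ℕ) : ℝ :=
  contigTerm x n j * ((2 * x - n + j) * (2 * x + j) / ((x - 1/2 - n) * (x - 1/2 - n + j)))

theorem half_add_sub_ne_zero {x : ℝ} (hx : 0 < x) (hx6 : x < 1/6) (n j : ℕ) :
    1/2 + x - n + j ≠ 0 := by
  have := add_int_ne_zero (r := 1/2 + x) (by linarith) (by linarith) (j - n)
  push_cast at this
  convert this using 1; ring

theorem two_mul_sub_ne_zero {x : ℝ} (hx : 0 < x) (hx6 : x < 1/6) (n j : ℕ) :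
    2 * x - n + j ≠ 0 := by
  have := add_int_ne_zero (r := 2 * x) (by linarith) (by linarith) (j - n)
  push_cast at this
  convert this using 1; ring

theorem contigTerm_add_one {x : ℝ} (hx : 0 < x) (hx6 : x < 1/6) (n j : ℕ) :
    contigTerm x (n + 1) j = contigTerm x n j * ((2 * x - n + j) / (x - 1/2 - n + j)) := by
  have h1 := half_add_sub_ne_zero hx hx6 (n + 1) j
  have h2 := two_mul_sub_ne_zero hx hx6 n j
  have e1 : 1/2 + x - ((n + 1 : ℕ) : ℝ) + j = x - 1/2 - n + j := by push_cast; ring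
  rw [e1] at h1
  unfold contigTerm
  rw [e1, show 1 + 2 * x - ((n + 1 : ℕ) : ℝ) + j = 2 * x - n + j by push_cast; ring,
    show 1/2 + x - (n : ℝ) + j = (x - 1/2 - n + j) + 1 by ring,
    show 1 + 2 * x - (n : ℝ) + j = (2 * x - n + j) + 1 by ring, Real.Gamma_add_one h1,
    Real.Gamma_add_one h2]
  generalize x - 1/2 - (n : ℝ) + j = a at *
  generalize 2 * x - (n : ℝ) + j = b at *
  field_simp

theorem contigCert_succ {x : ℝ} (hx : 0 < x) (hx6 : x < 1/6) (n j : ℕ) :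
    contigCert x n (j + 1) = contigTerm x n j * ((1/2 + x + j) / (x - 1/2 - n)) := by
  have h1 := half_add_sub_ne_zero hx hx6 n j
  have h2 := two_mul_sub_ne_zero hx hx6 n (j + 1)
  have h3 : 1/2 + x + j ≠ 0 := by positivity
  have h4 : 1 + 2 * x + j ≠ 0 := by positivity
  have h5 : x - 1/2 - n ≠ 0 := by
    have : (0 : ℝ) ≤ n := Nat.cast_nonneg n
    intro h; linarith
  have e2 : 2 * x - n + ((j + 1 : ℕ) : ℝ) = 1 + 2 * x - n + j := by push_cast; ring
  rw [e2] at h2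
  unfold contigCert contigTerm
  rw [e2, show 1/2 + x - (n : ℝ) + ((j + 1 : ℕ) : ℝ) = 1/2 + x - n + j + 1 by push_cast; ring,
    show 1 + 2 * x - (n : ℝ) + ((j + 1 : ℕ) : ℝ) = 1 + 2 * x - n + j + 1 by push_cast; ring,
    show 1/2 + x + ((j + 1 : ℕ) : ℝ) = 1/2 + x + j + 1 by push_cast; ring,
    show 1 + 2 * x + ((j + 1 : ℕ) : ℝ) = 1 + 2 * x + j + 1 by push_cast; ring,
    show 2 * x + ((j + 1 : ℕ) : ℝ) = 1 + 2 * x + j by push_cast; ring,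
    show x - 1/2 - n + ((j + 1 : ℕ) : ℝ) = 1/2 + x - n + j by push_cast; ring,
    Real.Gamma_add_one h1, Real.Gamma_add_one h2, Real.Gamma_add_one h3, Real.Gamma_add_one h4]
  generalize Real.Gamma (1/2 + x - n + j) = A
  generalize Real.Gamma (1 + 2 * x - n + j) = B
  generalize Real.Gamma (1/2 + x + j) = C
  generalize Real.Gamma (1 + 2 * x + j) = D
  generalize 1/2 + x - n + j = a at *
  generalize 1 + 2 * x - n + j = b at *
  generalize 1/2 + x + j = c at *
  generalize 1 + 2 * x + j = d at *
  field_simp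

theorem contigTerm_telescope {x : ℝ} (hx : 0 < x) (hx6 : x < 1/6) (n j : ℕ) :
    contigTerm x n j - (1/2 + x + n) / (1/2 - x + n) * contigTerm x (n + 1) j =
      contigCert x n j - contigCert x n (j + 1) := by
  rw [contigCert_succ hx hx6, contigTerm_add_one hx hx6, contigCert]
  have h1 := half_add_sub_ne_zero hx hx6 (n + 1) j
  have e1 : 1/2 + x - ((n + 1 : ℕ) : ℝ) + j = x - 1/2 - n + j := by push_cast; ring
  rw [e1] at h1
  have h5 : 1/2 - x + n ≠ 0 := by
    have : (0 : ℝ) ≤ n := Nat.cast_nonneg n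
    intro h; linarith
  have e6 : x - 1/2 - n = -(1/2 - x + n) := by ring
  generalize contigTerm x n j = K
  have h7 : -(1/2 - x + n) + j ≠ 0 := by rwa [← e6]
  rw [e6]
  generalize hw : 1/2 - x + (n : ℝ) = w at *
  have hn : (n : ℝ) = w - 1/2 + x := by linarith
  rw [hn]
  field_simp
  ring

theorem summable_contigTerm {x : ℝ} (hx : 0 < x) (n : ℕ) : Summable (contigTerm x n) :=
  summable_Gamma_ratio_mul (1/2 + x - n) (1 + 2 * x - n) (1/2 + x) (1 + 2 * x) (by linarith)

theorem tendsto_contigCert {x : ℝ} (hx : 0 < x) (hx6 : x < 1/6) (n : ℕ) :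
    Tendsto (contigCert x n) atTop (𝓝 0) := by
  rw [← tendsto_add_atTop_iff_nat 1]
  obtain ⟨K, hK, hb⟩ := Gamma_ratio_mul_bounded (1/2 + x - n) (1 + 2 * x - n) (1/2 + x) (1 + 2 * x)
  have h5 : x - 1/2 - n ≠ 0 := by
    have : (0 : ℝ) ≤ n := Nat.cast_nonneg n
    intro h; linarith
  have h : Tendsto (fun j : ℕ => contigTerm x n j * (1/2 + x + j)) atTop (𝓝 0) := by
    refine tendsto_zero_of_abs_le_rpow (C := K) (s := -(2 * x)) (by linarith) fun j => ?_
    have hj : (0 : ℝ) ≤ j := Nat.cast_nonneg j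
    rw [abs_mul, abs_of_nonneg (show 0 ≤ 1/2 + x + (j : ℝ) by positivity)]
    calc |contigTerm x n j| * (1/2 + x + j) ≤
          (K * ((j : ℝ) + 1) ^ (-(2 * x) - 1)) * (j + 1) := by
          refine mul_le_mul ((hb j).trans (le_of_eq ?_)) (by linarith) (by positivity)
            (by positivity)
          congr 2; ring
      _ = _ := by
        rw [mul_assoc, ← Real.rpow_add_one (by positivity)]
        congr 2; ring
  have h' := h.mul_const (x - 1/2 - n)⁻¹
  rw [zero_mul] at h'
  refine h'.congr fun j => ?_
  rw [contigCert_succ hx hx6]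
  ring

theorem tsum_contigTerm_step {x : ℝ} (hx : 0 < x) (hx6 : x < 1/6) (n : ℕ) :
    ∑' j, contigTerm x n j - (1/2 + x + n) / (1/2 - x + n) * ∑' j, contigTerm x (n + 1) j =
      contigCert x n 0 := by
  have s1 := summable_contigTerm hx n
  have s2 := (summable_contigTerm hx (n + 1)).mul_left ((1/2 + x + n) / (1/2 - x + n))
  have := hasSum_of_eq_sub (s1.sub s2) (contigTerm_telescope hx hx6 n) (tendsto_contigCert hx hx6 n)
  rw [s1.tsum_sub s2, tsum_mul_left, sub_zero] at this
  exact this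

/-- The normalising ratio `Γ(n+½+x)/Γ(n+½-x)`. -/
noncomputable def halfRatio (x : ℝ) (n : ℕ) : ℝ :=
  Real.Gamma (1/2 + x + n) / Real.Gamma (1/2 - x + n)

/-- The terms `Γ(n+½+x) Γ(n+1-2x) / Γ(n+3/2-x)²`. -/
noncomputable def catTerm (x : ℝ) (n : ℕ) : ℝ :=
  Real.Gamma (1/2 + x + n) / Real.Gamma (3/2 - x + n) *
    (Real.Gamma (1 - 2 * x + n) / Real.Gamma (3/2 - x + n))

theorem halfRatio_pos {x : ℝ} (hx : 0 < x) (hx6 : x < 1/6) (n : ℕ) : 0 < halfRatio x n := by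
  have hn : (0 : ℝ) ≤ n := Nat.cast_nonneg n
  exact div_pos (Real.Gamma_pos_of_pos (by positivity)) (Real.Gamma_pos_of_pos (by linarith))

theorem halfRatio_add_one {x : ℝ} (hx : 0 < x) (hx6 : x < 1/6) (n : ℕ) :
    halfRatio x (n + 1) = halfRatio x n * ((1/2 + x + n) / (1/2 - x + n)) := by
  have hn : (0 : ℝ) ≤ n := Nat.cast_nonneg n
  have h1 : 1/2 + x + n ≠ 0 := by positivity
  have h2 : 1/2 - x + n ≠ 0 := by intro h; linarith
  unfold halfRatio
  rw [Nat.cast_succ, ← add_assoc, ← add_assoc, Real.Gamma_add_one h1, Real.Gamma_add_one h2]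
  rw [mul_div_mul_comm, mul_comm]

theorem sin_pi_mul_pos {r : ℝ} (h0 : 0 < r) (h1 : r < 1) : 0 < Real.sin (Real.pi * r) :=
  Real.sin_pos_of_pos_of_lt_pi (mul_pos Real.pi_pos h0) (by nlinarith [Real.pi_pos])

theorem sin_pi_mul_half_add (x : ℝ) : Real.sin (Real.pi * (1/2 + x)) = Real.cos (Real.pi * x) := by
  rw [show Real.pi * (1/2 + x) = Real.pi * x + Real.pi / 2 by ring, Real.sin_add_pi_div_two]

theorem cos_pi_mul_pos {x : ℝ} (hx : 0 < x) (hx6 : x < 1/2) : 0 < Real.cos (Real.pi * x) := by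
  rw [← sin_pi_mul_half_add]
  exact sin_pi_mul_pos (by linarith) (by linarith)

theorem sin_two_div_cos {x : ℝ} (hx : 0 < x) (hx6 : x < 1/6) :
    Real.sin (Real.pi * (2 * x)) / Real.sin (Real.pi * (1/2 + x)) = 2 * Real.sin (Real.pi * x) := by
  have := cos_pi_mul_pos hx (by linarith)
  rw [sin_pi_mul_half_add, show Real.pi * (2 * x) = 2 * (Real.pi * x) by ring, Real.sin_two_mul]
  field_simp

theorem halfRatio_mul_contigCert {x : ℝ} (hx : 0 < x) (hx6 : x < 1/6) (n : ℕ) :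
    halfRatio x n * contigCert x n 0 =
      Real.Gamma (1/2 + x) / Real.Gamma (2 * x) * (2 * Real.sin (Real.pi * x)) * catTerm x n := by
  have hn : (0 : ℝ) ≤ n := Nat.cast_nonneg n
  have h2 := two_mul_sub_ne_zero hx hx6 n 0
  have h3 : 1/2 - x + n ≠ 0 := by intro h; linarith
  have h4 : 2 * x ≠ 0 := by positivity
  have hr := Gamma_sub_nat_div (s := 1/2 + x) (t := 2 * x)
    (sin_pi_mul_pos (by linarith) (by linarith)).ne'
    (sin_pi_mul_pos (by linarith) (by linarith)).ne' n
  rw [sin_two_div_cos hx hx6, show 1 - (1/2 + x) + (n : ℝ) = 1/2 - x + n by ring] at hr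
  unfold contigCert contigTerm catTerm halfRatio
  rw [Nat.cast_zero, add_zero] at *
  simp only [add_zero]
  rw [show 1 + 2 * x - (n : ℝ) = 2 * x - n + 1 by ring, Real.Gamma_add_one h2,
    show 1 + 2 * x = 2 * x + 1 by ring, Real.Gamma_add_one h4,
    show 3/2 - x + (n : ℝ) = 1/2 - x + n + 1 by ring, Real.Gamma_add_one h3,
    show x - 1/2 - (n : ℝ) = -(1/2 - x + n) by ring]
  have hc : Real.Gamma (1/2 + x - n) / ((2 * x - n) * Real.Gamma (2 * x - n)) =
      2 * Real.sin (Real.pi * x) *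
        (Real.Gamma (1 - 2 * x + n) / Real.Gamma (1/2 - x + n)) / (2 * x - n) := by
    rw [← hr, div_div, mul_comm (Real.Gamma _)]
  rw [hc]
  generalize Real.Gamma (1/2 - x + n) = a
  generalize Real.Gamma (1 - 2 * x + n) = b
  generalize Real.Gamma (1/2 + x + n) = c
  generalize Real.sin (Real.pi * x) = d
  generalize 1/2 - x + (n : ℝ) = w at *
  generalize 2 * x - (n : ℝ) = v at *
  field_simp

theorem summable_catTerm {x : ℝ} (hx : x < 1/6) : Summable (catTerm x) :=
  summable_Gamma_ratio_mul (1/2 + x) (3/2 - x) (1 - 2 * x) (3/2 - x) (by linarith)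

theorem sum_range_rpow_le {s : ℝ} (h0 : 0 ≤ s) (h1 : s < 1) (n : ℕ) :
    (1 - s) * ∑ j ∈ Finset.range n, ((j : ℝ) + 1) ^ (-s) ≤ (n : ℝ) ^ (1 - s) := by
  induction n with
  | zero => simp; positivity
  | succ n ih =>
    rw [Finset.sum_range_succ, mul_add, Nat.cast_succ]
    have hp : (0 : ℝ) < n + 1 := by positivity
    have hb : (1 + -(1 / ((n : ℝ) + 1))) ^ (1 - s) ≤ 1 + (1 - s) * -(1 / ((n : ℝ) + 1)) := by
      apply rpow_one_add_le_one_add_mul_self _ (by linarith) (by linarith)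
      rw [neg_le_neg_iff, div_le_one hp]
      linarith [(Nat.cast_nonneg n : (0 : ℝ) ≤ n)]
    have e1 : (n : ℝ) ^ (1 - s) =
        ((n : ℝ) + 1) ^ (1 - s) * (1 + -(1 / ((n : ℝ) + 1))) ^ (1 - s) := by
      rw [show 1 + -(1 / ((n : ℝ) + 1)) = n / (n + 1) by field_simp; ring,
        ← Real.mul_rpow hp.le (by positivity)]
      congr 1; field_simp
    have e2 : ((n : ℝ) + 1) ^ (1 - s) * (1 / ((n : ℝ) + 1)) = ((n : ℝ) + 1) ^ (-s) := by
      rw [show -s = 1 - s - 1 by ring, Real.rpow_sub_one hp.ne']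
      ring
    have := mul_le_mul_of_nonneg_left hb (show 0 ≤ ((n : ℝ) + 1) ^ (1 - s) by positivity)
    rw [← e1] at this
    nlinarith

theorem rpow_mul_rpow_le {p q s : ℝ} (hp : 0 < p) (hq : 0 < q) (hs : 0 ≤ s) :
    p ^ (-s) * q ^ (-s) ≤ ((p + q) / 2) ^ (-s) * (p ^ (-s) + q ^ (-s)) := by
  have h1 : 0 < p ^ (-s) := by positivity
  have h2 : 0 < q ^ (-s) := by positivity
  have h3 : 0 < ((p + q) / 2) ^ (-s) := by positivity
  rcases le_total p q with h | h
  · have : q ^ (-s) ≤ ((p + q) / 2) ^ (-s) :=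
      Real.rpow_le_rpow_of_nonpos (by positivity) (by linarith) (by linarith)
    nlinarith
  · have : p ^ (-s) ≤ ((p + q) / 2) ^ (-s) :=
      Real.rpow_le_rpow_of_nonpos (by positivity) (by linarith) (by linarith)
    nlinarith

theorem sum_range_conv_rpow_le {s : ℝ} (h0 : 0 ≤ s) (h1 : s < 1) (n : ℕ) :
    ∑ j ∈ Finset.range n, (((n - 1 - j : ℕ) : ℝ) + 1) ^ (-s) * ((j : ℝ) + 1) ^ (-s) ≤
      2 * 2 ^ s / (1 - s) * ((n : ℝ) + 1) ^ (1 - 2 * s) := by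
  have hs := sum_range_rpow_le h0 h1 n
  have hrefl : ∑ j ∈ Finset.range n, (((n - 1 - j : ℕ) : ℝ) + 1) ^ (-s) =
      ∑ j ∈ Finset.range n, ((j : ℝ) + 1) ^ (-s) :=
    Finset.sum_range_reflect (fun j : ℕ => ((j : ℝ) + 1) ^ (-s)) n
  have hle : ∑ j ∈ Finset.range n, (((n - 1 - j : ℕ) : ℝ) + 1) ^ (-s) * ((j : ℝ) + 1) ^ (-s) ≤
      ∑ j ∈ Finset.range n, (((n : ℝ) + 1) / 2) ^ (-s) *
        ((((n - 1 - j : ℕ) : ℝ) + 1) ^ (-s) + ((j : ℝ) + 1) ^ (-s)) := by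
    refine Finset.sum_le_sum fun j hj => ?_
    have hj' := Finset.mem_range.1 hj
    have := rpow_mul_rpow_le (p := ((n - 1 - j : ℕ) : ℝ) + 1) (q := (j : ℝ) + 1) (by positivity)
      (by positivity) h0
    have e : ((n - 1 - j : ℕ) : ℝ) + 1 + ((j : ℝ) + 1) = n + 1 := by
      have : (n - 1 - j) + 1 + (j + 1) = n + 1 := by omega
      exact_mod_cast this
    rwa [e] at this
  refine hle.trans ?_
  rw [← Finset.mul_sum, Finset.sum_add_distrib, hrefl]
  have hn : (n : ℝ) ^ (1 - s) ≤ ((n : ℝ) + 1) ^ (1 - s) :=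
    Real.rpow_le_rpow (by positivity) (by linarith) (by linarith)
  have h1s : 0 < 1 - s := by linarith
  have hs' : ∑ j ∈ Finset.range n, ((j : ℝ) + 1) ^ (-s) ≤ ((n : ℝ) + 1) ^ (1 - s) / (1 - s) := by
    rw [le_div_iff₀ h1s]; linarith
  rw [Real.div_rpow (by positivity) (by positivity), Real.rpow_neg (x := 2) (by norm_num),
    show 1 - 2 * s = -s + (1 - s) by ring, Real.rpow_add (by positivity)]
  have hp : 0 < ((n : ℝ) + 1) ^ (-s) := by positivity
  have h2s : (0 : ℝ) < 2 ^ s := by positivity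
  calc _ ≤ ((n : ℝ) + 1) ^ (-s) / (2 ^ s)⁻¹ *
        (((n : ℝ) + 1) ^ (1 - s) / (1 - s) + ((n : ℝ) + 1) ^ (1 - s) / (1 - s)) := by
        gcongr
    _ = _ := by
      generalize ((n : ℝ) + 1) ^ (-s) = a
      generalize ((n : ℝ) + 1) ^ (1 - s) = b
      field_simp
      ring

/-- The weights used in the averaging argument. -/
noncomputable def avgWeight (x : ℝ) (n j : ℕ) : ℝ :=
  halfRatio x n * gaussTerm (1/2 + x - n) (1/2 - x) (1 + 2 * x - n) j

theorem tsum_avgWeight {x : ℝ} (hx : 0 < x) (hx6 : x < 1/6) (n : ℕ) :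
    ∑' j, avgWeight x n j = Real.Gamma (1/2 - x) * Real.Gamma (2 * x) / Real.Gamma (1/2 + x) *
      (Real.cos (Real.pi * (3 * x)) / Real.cos (Real.pi * x)) *
      (halfRatio x n * (Real.Gamma (1/2 - 3 * x + n) / Real.Gamma (1/2 - x + n))) := by
  have hr := Gamma_sub_nat_div (s := 1/2 + x) (t := 1/2 + 3 * x)
    (sin_pi_mul_pos (by linarith) (by linarith)).ne'
    (sin_pi_mul_pos (by linarith) (by linarith)).ne' n
  rw [sin_pi_mul_half_add, sin_pi_mul_half_add, show 1 - (1/2 + 3 * x) = 1/2 - 3 * x by ring,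
    show 1 - (1/2 + x) = 1/2 - x by ring] at hr
  have hg := tsum_gaussTerm (A := 1/2 + x - n) (B := 1/2 - x) (C := 1 + 2 * x - n)
    (half_add_sub_ne_zero hx hx6 n)
    (fun m => by
      have : (0 : ℝ) ≤ m := Nat.cast_nonneg m
      intro h; linarith)
    (fun m => by
      have := two_mul_sub_ne_zero hx hx6 n (m + 1)
      push_cast at this
      convert this using 1; ring)
    (fun m => by
      have : (0 : ℝ) ≤ m := Nat.cast_nonneg m
      intro h; linarith)
    (fun m => by
      have := add_int_ne_zero (r := 1/2 + 3 * x) (by linarith) (by linarith) (m - n)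
      push_cast at this
      convert this using 1; ring) (by linarith)
  rw [show 1 + 2 * x - (n : ℝ) - (1/2 + x - n) - (1/2 - x) = 2 * x by ring,
    show 1 + 2 * x - (n : ℝ) - (1/2 + x - n) = 1/2 + x by ring,
    show 1 + 2 * x - (n : ℝ) - (1/2 - x) = 1/2 + 3 * x - n by ring] at hg
  unfold avgWeight
  rw [tsum_mul_left]
  have g1 := Real.Gamma_pos_of_pos (show 0 < 2 * x by linarith)
  have g2 := Real.Gamma_pos_of_pos (show 0 < 1/2 + x by linarith)
  have g3 : Real.Gamma (1/2 + 3 * x - n) ≠ 0 := by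
    apply Real.Gamma_ne_zero
    intro m hm
    have := add_int_ne_zero (r := 1/2 + 3 * x) (by linarith) (by linarith) (m - n)
    push_cast at this
    exact this (by linarith)
  generalize ∑' j, gaussTerm (1/2 + x - n) (1/2 - x) (1 + 2 * x - n) j = T at *
  have hT : T = Real.Gamma (1/2 - x) * Real.Gamma (2 * x) / Real.Gamma (1/2 + x) *
      (Real.Gamma (1/2 + x - n) / Real.Gamma (1/2 + 3 * x - n)) := by
    generalize Real.Gamma (1/2 + 3 * x - n) = a at *
    generalize Real.Gamma (1/2 + x - n) = b at *
    generalize Real.Gamma (1/2 + x) = c at *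
    generalize Real.Gamma (2 * x) = d at *
    generalize Real.Gamma (1/2 - x) = e at *
    field_simp at hg ⊢
    linarith
  rw [hT, hr]
  ring

theorem tendsto_tsum_avgWeight {x : ℝ} (hx : 0 < x) (hx6 : x < 1/6) :
    Tendsto (fun n => ∑' j, avgWeight x n j) atTop
      (𝓝 (Real.Gamma (1/2 - x) * Real.Gamma (2 * x) / Real.Gamma (1/2 + x) *
      (Real.cos (Real.pi * (3 * x)) / Real.cos (Real.pi * x)))) := by
  simp_rw [tsum_avgWeight hx hx6]
  have h := (tendsto_Gamma_ratio (1/2 + x) (1/2 - x)).mul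
    (tendsto_Gamma_ratio (1/2 - 3 * x) (1/2 - x))
  have h' := h.const_mul (Real.Gamma (1/2 - x) * Real.Gamma (2 * x) / Real.Gamma (1/2 + x) *
      (Real.cos (Real.pi * (3 * x)) / Real.cos (Real.pi * x)))
  rw [mul_one, mul_one] at h'
  refine h'.congr fun n => ?_
  unfold halfRatio
  rw [show 1/2 - x - (1/2 - 3 * x) = -(1/2 - x - (1/2 + x)) by ring, Real.rpow_neg (by positivity)]
  have : (0 : ℝ) < ((n : ℝ) + 1) ^ (1/2 - x - (1/2 + x)) := by positivity
  generalize ((n : ℝ) + 1) ^ (1/2 - x - (1/2 + x)) = p at *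
  congr 1
  field_simp

theorem summable_avgWeight {x : ℝ} (hx : 0 < x) (n : ℕ) : Summable (avgWeight x n) :=
  (summable_gaussTerm (by linarith)).mul_left _

theorem tendsto_avgWeight {x : ℝ} (hx : 0 < x) (hx6 : x < 1/6) (j : ℕ) :
    Tendsto (fun n => avgWeight x n j) atTop (𝓝 0) := by
  obtain ⟨K, hK, hb⟩ := Gamma_ratio_mul_bounded (1/2 + x) (1/2 - x) (1 - (1 + 2 * x + j))
    (1 - (1/2 + x + j))
  have h1 : Tendsto (fun n : ℕ => halfRatio x n * (Real.Gamma (1 - (1 + 2 * x + j) + n) /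
      Real.Gamma (1 - (1/2 + x + j) + n))) atTop (𝓝 0) :=
    tendsto_zero_of_abs_le_rpow (by linarith) hb
  have hsj : ∀ r : ℝ, Real.sin (Real.pi * (r + j)) = (-1) ^ j * Real.sin (Real.pi * r) := by
    intro r
    rw [mul_add, mul_comm Real.pi (j : ℝ), Real.sin_add_nat_mul_pi]
  have hs1 : Real.sin (Real.pi * (1/2 + x + j)) ≠ 0 := by
    rw [hsj]
    exact mul_ne_zero (by simp) (sin_pi_mul_pos (by linarith) (by linarith)).ne'
  have hs2 : Real.sin (Real.pi * (1 + 2 * x + j)) ≠ 0 := by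
    rw [show 1 + 2 * x + (j : ℝ) = 2 * x + ((j + 1 : ℕ) : ℝ) by push_cast; ring, mul_add,
      mul_comm Real.pi ((j + 1 : ℕ) : ℝ), Real.sin_add_nat_mul_pi]
    exact mul_ne_zero (by simp) (sin_pi_mul_pos (by linarith) (by linarith)).ne'
  have h2 := h1.mul_const (Real.sin (Real.pi * (1 + 2 * x + j)) /
    Real.sin (Real.pi * (1/2 + x + j)) * (Real.Gamma (1/2 - x + j) / Real.Gamma (1 + j)))
  rw [zero_mul] at h2
  refine h2.congr fun n => ?_
  unfold avgWeight gaussTerm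
  rw [show 1/2 + x - (n : ℝ) + j = 1/2 + x + j - n by ring,
    show 1 + 2 * x - (n : ℝ) + j = 1 + 2 * x + j - n by ring, Gamma_sub_nat_div hs1 hs2 n]
  ring

theorem avgWeight_nonneg {x : ℝ} (hx : 0 < x) (hx6 : x < 1/6) {n j : ℕ} (h : n ≤ j) :
    0 ≤ avgWeight x n j := by
  have h' : (n : ℝ) ≤ j := by exact_mod_cast h
  have hj : (0 : ℝ) ≤ j := Nat.cast_nonneg j
  exact mul_nonneg (halfRatio_pos hx hx6 n).le (mul_nonneg
    (div_nonneg (Real.Gamma_pos_of_pos (by linarith)).le (Real.Gamma_pos_of_pos (by linarith)).le)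
    (div_nonneg (Real.Gamma_pos_of_pos (by linarith)).le (Real.Gamma_pos_of_pos (by linarith)).le))

theorem exists_sum_abs_avgWeight_le {x : ℝ} (hx : 0 < x) (hx6 : x < 1/6) :
    ∃ M, ∀ n : ℕ, ∑ j ∈ Finset.range n, |avgWeight x n j| ≤ M := by
  obtain ⟨C₁, hC₁, h₁⟩ := Gamma_ratio_bounded (1 - 2 * x) (3/2 - x)
  obtain ⟨C₂, hC₂, h₂⟩ := Gamma_ratio_bounded (1/2 - x) 1
  obtain ⟨C₃, hC₃, h₃⟩ := Gamma_ratio_bounded (1/2 + x) (1/2 - x)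
  have hsin := sin_pi_mul_pos hx (by linarith)
  have hs : 0 ≤ 1/2 + x := by linarith
  refine ⟨C₃ * (2 * Real.sin (Real.pi * x) * C₁) * C₂ * (2 * 2 ^ (1/2 + x) / (1 - (1/2 + x))),
    fun n => ?_⟩
  have hterm : ∀ j ∈ Finset.range n, |avgWeight x n j| ≤
      C₃ * (2 * Real.sin (Real.pi * x) * C₁) * C₂ * ((n : ℝ) + 1) ^ (2 * x) *
        ((((n - 1 - j : ℕ) : ℝ) + 1) ^ (-(1/2 + x)) * ((j : ℝ) + 1) ^ (-(1/2 + x))) := by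
    intro j hj
    have hj' := Finset.mem_range.1 hj
    have hsin1 : Real.sin (Real.pi * (1 + 2 * x)) = - Real.sin (Real.pi * (2 * x)) := by
      rw [show Real.pi * (1 + 2 * x) = Real.pi * (2 * x) + Real.pi by ring, Real.sin_add_pi]
    have hr := Gamma_sub_nat_div (s := 1/2 + x) (t := 1 + 2 * x)
      (sin_pi_mul_pos (by linarith) (by linarith)).ne'
      (by rw [hsin1]; exact neg_ne_zero.2 (sin_pi_mul_pos (by linarith) (by linarith)).ne') (n - j)
    have hm : ((n - j : ℕ) : ℝ) = ((n - 1 - j : ℕ) : ℝ) + 1 := by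
      have : n - j = (n - 1 - j) + 1 := by omega
      rw [this]; push_cast; ring
    rw [hsin1, neg_div, sin_two_div_cos hx hx6] at hr
    have hnj : ((n - j : ℕ) : ℝ) = n - j := by rw [Nat.cast_sub hj'.le]
    have hr' : |Real.Gamma (1/2 + x - n + j) / Real.Gamma (1 + 2 * x - n + j)| ≤
        2 * Real.sin (Real.pi * x) * (C₁ * (((n - 1 - j : ℕ) : ℝ) + 1) ^ (-(1/2 + x))) := by
      rw [show 1/2 + x - (n : ℝ) + j = 1/2 + x - ((n - j : ℕ) : ℝ) by rw [hnj]; ring,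
        show 1 + 2 * x - (n : ℝ) + j = 1 + 2 * x - ((n - j : ℕ) : ℝ) by rw [hnj]; ring, hr,
        abs_mul, abs_neg, abs_of_pos (by positivity)]
      apply mul_le_mul_of_nonneg_left _ (by positivity)
      have := h₁ (n - 1 - j)
      rwa [hm, show 1 - (1 + 2 * x) + (((n - 1 - j : ℕ) : ℝ) + 1) =
          1 - 2 * x + ((n - 1 - j : ℕ) : ℝ) by ring,
        show 1 - (1/2 + x) + (((n - 1 - j : ℕ) : ℝ) + 1) = 3/2 - x + ((n - 1 - j : ℕ) : ℝ) by ring,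
        show -(1/2 + x) = 1 - 2 * x - (3/2 - x) by ring]
    have h2' : |Real.Gamma (1/2 - x + j) / Real.Gamma (1 + j)| ≤
        C₂ * ((j : ℝ) + 1) ^ (-(1/2 + x)) := by
      rw [show -(1/2 + x) = 1/2 - x - 1 by ring]
      exact h₂ j
    have h3' : |halfRatio x n| ≤ C₃ * ((n : ℝ) + 1) ^ (2 * x) := by
      rw [show 2 * x = 1/2 + x - (1/2 - x) by ring]
      exact h₃ n
    unfold avgWeight gaussTerm
    rw [abs_mul, abs_mul]
    calc _ ≤ (C₃ * ((n : ℝ) + 1) ^ (2 * x)) *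
          ((2 * Real.sin (Real.pi * x) * (C₁ * (((n - 1 - j : ℕ) : ℝ) + 1) ^ (-(1/2 + x)))) *
            (C₂ * ((j : ℝ) + 1) ^ (-(1/2 + x)))) := by gcongr
      _ = _ := by ring
  refine (Finset.sum_le_sum hterm).trans ?_
  rw [← Finset.mul_sum]
  have hconv := sum_range_conv_rpow_le hs (by linarith) n
  calc _ ≤ C₃ * (2 * Real.sin (Real.pi * x) * C₁) * C₂ * ((n : ℝ) + 1) ^ (2 * x) *
        (2 * 2 ^ (1/2 + x) / (1 - (1/2 + x)) * ((n : ℝ) + 1) ^ (1 - 2 * (1/2 + x))) := by gcongr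
    _ = _ := by
      rw [show 1 - 2 * (1/2 + x) = -(2 * x) by ring, Real.rpow_neg (by positivity)]
      have : (0 : ℝ) < ((n : ℝ) + 1) ^ (2 * x) := by positivity
      generalize ((n : ℝ) + 1) ^ (2 * x) = p at *
      rw [show ∀ a b : ℝ, a * p * (b * p⁻¹) = a * b * (p * p⁻¹) by intros; ring,
        mul_inv_cancel₀ this.ne', mul_one]

theorem exists_tsum_abs_avgWeight_le {x : ℝ} (hx : 0 < x) (hx6 : x < 1/6) :
    ∃ M, ∀ n : ℕ, ∑' j, |avgWeight x n j| ≤ M := by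
  obtain ⟨M₁, h₁⟩ := exists_sum_abs_avgWeight_le hx hx6
  obtain ⟨M₂, h₂⟩ := (tendsto_tsum_avgWeight hx hx6).bddAbove_range
  refine ⟨M₂ + 2 * M₁, fun n => ?_⟩
  have hs := summable_avgWeight hx n
  have h2 : ∑' j, avgWeight x n j ≤ M₂ := h₂ ⟨n, rfl⟩
  rw [← hs.abs.sum_add_tsum_nat_add n]
  rw [← hs.sum_add_tsum_nat_add n] at h2
  have e : ∀ j, |avgWeight x n (j + n)| = avgWeight x n (j + n) := fun j =>
    abs_of_nonneg (avgWeight_nonneg hx hx6 (by omega))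
  simp_rw [e]
  have h3 := Finset.abs_sum_le_sum_abs (fun j => avgWeight x n j) (Finset.range n)
  have h4 := neg_abs_le (∑ j ∈ Finset.range n, avgWeight x n j)
  linarith [h₁ n]

theorem tendsto_halfRatio_mul_tsum_contigTerm {x : ℝ} (hx : 0 < x) (hx6 : x < 1/6) :
    Tendsto (fun n => halfRatio x n * ∑' j, contigTerm x n j) atTop
      (𝓝 (Real.Gamma (1/2 - x) * Real.Gamma (2 * x) / Real.Gamma (1/2 + x) *
      (Real.cos (Real.pi * (3 * x)) / Real.cos (Real.pi * x)))) := by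
  obtain ⟨M, hM⟩ := exists_tsum_abs_avgWeight_le hx hx6
  have hc : Tendsto (fun j : ℕ => Real.Gamma (1/2 + x + j) / Real.Gamma (1 + 2 * x + j) *
      (Real.Gamma (1 + j) / Real.Gamma (1/2 - x + j))) atTop (𝓝 1) := by
    have h := (tendsto_Gamma_ratio (1/2 + x) (1 + 2 * x)).mul (tendsto_Gamma_ratio 1 (1/2 - x))
    rw [one_mul] at h
    refine h.congr fun n => ?_
    rw [show 1/2 - x - 1 = -(1 + 2 * x - (1/2 + x)) by ring, Real.rpow_neg (by positivity)]
    have : (0 : ℝ) < ((n : ℝ) + 1) ^ (1 + 2 * x - (1/2 + x)) := by positivity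
    generalize ((n : ℝ) + 1) ^ (1 + 2 * x - (1/2 + x)) = p at *
    field_simp
  have h := tendsto_tsum_mul_of_tendsto_one (a := avgWeight x)
    (Eventually.of_forall (summable_avgWeight hx)) (Eventually.of_forall hM)
    (tendsto_avgWeight hx hx6) (tendsto_tsum_avgWeight hx hx6) hc
  refine h.congr fun n => ?_
  rw [← tsum_mul_left]
  congr 1; ext j
  have hj : (0 : ℝ) ≤ j := Nat.cast_nonneg j
  have g1 := (Real.Gamma_pos_of_pos (show 0 < 1/2 - x + j by linarith)).ne'
  have g2 := (Real.Gamma_pos_of_pos (show 0 < 1 + (j : ℝ) by linarith)).ne'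
  unfold avgWeight gaussTerm contigTerm
  generalize Real.Gamma (1/2 - x + j) = a at *
  generalize Real.Gamma (1 + (j : ℝ)) = b at *
  generalize Real.Gamma (1/2 + x + j) / Real.Gamma (1 + 2 * x + j) = c
  generalize Real.Gamma (1/2 + x - n + j) / Real.Gamma (1 + 2 * x - n + j) = d
  field_simp

/-- Evaluation of the sum of squared Gamma ratios. -/
theorem tsum_sq_Gamma_ratio {x : ℝ} (hx : 0 < x) (hx6 : x < 1/6) :
    Real.Gamma (1/2 + x) / Real.Gamma (1/2 - x) *
        ∑' j : ℕ, (Real.Gamma (1/2 + x + j) / Real.Gamma (1 + 2 * x + j)) ^ 2 =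
      Real.Gamma (1/2 - x) * Real.Gamma (2 * x) / Real.Gamma (1/2 + x) *
        (Real.cos (Real.pi * (3 * x)) / Real.cos (Real.pi * x)) +
      Real.Gamma (1/2 + x) / Real.Gamma (2 * x) * (2 * Real.sin (Real.pi * x)) *
        ∑' n, catTerm x n := by
  have hs := (summable_catTerm hx6).mul_left
    (Real.Gamma (1/2 + x) / Real.Gamma (2 * x) * (2 * Real.sin (Real.pi * x)))
  have h := hasSum_of_eq_sub (g := fun n => halfRatio x n * ∑' j, contigTerm x n j) hs
    (fun n => ?_) (tendsto_halfRatio_mul_tsum_contigTerm hx hx6)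
  · rw [tsum_mul_left] at h
    simp only [halfRatio, contigTerm, Nat.cast_zero, add_zero, sub_zero, ← sq] at h
    linarith
  · rw [← halfRatio_mul_contigCert hx hx6, ← tsum_contigTerm_step hx hx6, halfRatio_add_one hx hx6]
    ring

theorem choose_succ_mul_cast (N m : ℕ) :
    (N.choose (m + 1) : ℝ) * (m + 1) = N.choose m * (N - m) := by
  rcases le_or_gt m N with h | h
  · have := Nat.choose_succ_right_eq N m
    rw [← Nat.cast_sub h]
    exact_mod_cast this
  · rw [Nat.choose_eq_zero_of_lt h, Nat.choose_eq_zero_of_lt (by omega)]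
    simp

/-- The terms `(-1)^k C(2n+1, n+k+1) / (2k+1)`. -/
noncomputable def altTerm (n k : ℕ) : ℝ :=
  (-1) ^ k * ((2 * n + 1).choose (n + k + 1) : ℝ) / (2 * k + 1)

theorem summable_altTerm (n : ℕ) : Summable (altTerm n) := by
  refine summable_of_ne_finset_zero (s := Finset.range (n + 1)) fun k hk => ?_
  rw [Finset.mem_range, not_lt] at hk
  rw [altTerm, Nat.choose_eq_zero_of_lt (by omega)]
  simp

theorem altTerm_telescope (n k : ℕ) :
    (2 * n + 3) * altTerm (n + 1) k - 8 * (n + 1) * altTerm n k =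
      ((-1) ^ k * ((2 * n + 1).choose (n + k) : ℝ)
        + (-1) ^ (k + 1) * ((2 * n + 1).choose (n + (k + 1)) : ℝ))
      - ((-1) ^ (k + 1) * ((2 * n + 1).choose (n + (k + 1)) : ℝ)
        + (-1) ^ (k + 2) * ((2 * n + 1).choose (n + (k + 2)) : ℝ)) := by
  have h1 := choose_succ_mul_cast (2 * n + 1) (n + k)
  have h2 := choose_succ_mul_cast (2 * n + 1) (n + k + 1)
  have h3 : ((2 * (n + 1) + 1).choose (n + 1 + k + 1) : ℝ) =
      (2 * n + 1).choose (n + k) + 2 * (2 * n + 1).choose (n + k + 1)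
        + (2 * n + 1).choose (n + k + 1 + 1) := by
    have : (2 * (n + 1) + 1).choose (n + 1 + k + 1) =
      (2 * n + 1).choose (n + k) + 2 * (2 * n + 1).choose (n + k + 1)
        + (2 * n + 1).choose (n + k + 1 + 1) := by
      rw [show 2 * (n + 1) + 1 = 2 * n + 1 + 1 + 1 by ring,
        show n + 1 + k + 1 = n + k + 1 + 1 by ring,
        Nat.choose_succ_succ' (2 * n + 1 + 1) (n + k + 1),
        Nat.choose_succ_succ' (2 * n + 1) (n + k), Nat.choose_succ_succ' (2 * n + 1) (n + k + 1)]
      ring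
    exact_mod_cast this
  unfold altTerm
  rw [h3, ← add_assoc n k 1, show n + (k + 2) = n + k + 1 + 1 by ring]
  push_cast at h1 h2
  have hk : (2 * k + 1 : ℝ) ≠ 0 := by positivity
  generalize ((2 * n + 1).choose (n + k) : ℝ) = a at *
  generalize ((2 * n + 1).choose (n + k + 1) : ℝ) = b at *
  generalize ((2 * n + 1).choose (n + k + 1 + 1) : ℝ) = c at *
  rw [pow_add, pow_add]
  generalize (-1 : ℝ) ^ k = e at *
  field_simp
  linear_combination -2 * e * h1 + 2 * e * h2

theorem tsum_altTerm_succ (n : ℕ) :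
    (2 * n + 3) * ∑' k, altTerm (n + 1) k = 8 * (n + 1) * ∑' k, altTerm n k := by
  have s1 := (summable_altTerm (n + 1)).mul_left (2 * n + 3 : ℝ)
  have s2 := (summable_altTerm n).mul_left (8 * (n + 1) : ℝ)
  have hz : ∀ i, Tendsto (fun k => (-1) ^ (k + i) * ((2 * n + 1).choose (n + (k + i)) : ℝ)) atTop
      (𝓝 0) := by
    intro i
    refine tendsto_const_nhds.congr' ?_
    filter_upwards [eventually_gt_atTop (n + 1)] with k hk
    rw [Nat.choose_eq_zero_of_lt (by omega)]
    simp
  have h := hasSum_of_eq_sub (s1.sub s2) (altTerm_telescope n) ((hz 0).add (hz 1))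
  rw [s1.tsum_sub s2, tsum_mul_left, tsum_mul_left] at h
  have hsymm : (2 * n + 1).choose (n + 1) = (2 * n + 1).choose n := by
    rw [Nat.choose_symm_half]
  simp [hsymm] at h
  linarith

theorem tsum_altTerm (n : ℕ) :
    ∑' k, altTerm n k =
      4 ^ n * (Real.Gamma (3/2) * (Real.Gamma (1 + n) / Real.Gamma (3/2 + n))) := by
  induction n with
  | zero =>
    have hG := (Real.Gamma_pos_of_pos (show (0 : ℝ) < 3/2 by norm_num)).ne'
    have h0 : ∑' k, altTerm 0 k = altTerm 0 0 := by
      refine tsum_eq_single 0 fun k hk => ?_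
      rw [altTerm, Nat.choose_eq_zero_of_lt (by omega)]
      simp
    rw [h0]
    simp [altTerm, hG]
  | succ n ih =>
    have h := tsum_altTerm_succ n
    rw [ih] at h
    have h1 : (1 + n : ℝ) ≠ 0 := by positivity
    have h2 : (3/2 + n : ℝ) ≠ 0 := by positivity
    have hn : (2 * n + 3 : ℝ) ≠ 0 := by positivity
    have hG := (Real.Gamma_pos_of_pos (show (0 : ℝ) < 3/2 + n by positivity)).ne'
    rw [Nat.cast_succ, ← add_assoc, ← add_assoc, Real.Gamma_add_one h1, Real.Gamma_add_one h2]
    refine mul_left_cancel₀ hn (h.trans ?_)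
    generalize Real.Gamma (3/2 + n) = a at *
    generalize Real.Gamma (1 + n) = b at *
    generalize Real.Gamma (3/2) = c at *
    field_simp
    ring

/-- The terms `4^{-n} C(2n+1, n+k+1) / (2n+1)`. -/
noncomputable def ballotTerm (k n : ℕ) : ℝ :=
  (1/4) ^ n * ((2 * n + 1).choose (n + k + 1) : ℝ) / (2 * n + 1)

theorem ballotTerm_nonneg (k n : ℕ) : 0 ≤ ballotTerm k n := by
  unfold ballotTerm; positivity

theorem sq_centralBinom_le (n : ℕ) :
    ((1/4 : ℝ) ^ n * (n.centralBinom : ℝ)) ^ 2 * (2 * n + 1) ≤ 1 := by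
  induction n with
  | zero => simp
  | succ n ih =>
    have h : ((n : ℝ) + 1) * ((n + 1).centralBinom : ℝ) = 2 * (2 * n + 1) * n.centralBinom := by
      exact_mod_cast Nat.succ_mul_centralBinom_succ n
    have hp : (0 : ℝ) < n + 1 := by positivity
    have h' : ((n + 1).centralBinom : ℝ) = 2 * (2 * n + 1) * n.centralBinom / (n + 1) := by
      rw [eq_div_iff hp.ne']; linarith
    rw [h', pow_succ (1/4 : ℝ) n, Nat.cast_succ]
    generalize (n.centralBinom : ℝ) = c at *
    generalize (1/4 : ℝ) ^ n = q at *
    have e : (q * (1/4) * (2 * (2 * n + 1) * c / (n + 1))) ^ 2 * (2 * ((n : ℝ) + 1) + 1) =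
        ((q * c) ^ 2 * (2 * n + 1)) * ((2 * n + 1) * (2 * n + 3) / (4 * (n + 1) ^ 2)) := by
      field_simp; ring
    rw [e]
    refine mul_le_one₀ ih (by positivity) ?_
    rw [div_le_one (by positivity)]
    nlinarith

theorem tendsto_centralBinom : Tendsto (fun n : ℕ => (1/4 : ℝ) ^ n * (n.centralBinom : ℝ)) atTop
    (𝓝 0) := by
  have h : Tendsto (fun n : ℕ => 1 / ((n : ℝ) + 1)) atTop (𝓝 0) :=
    tendsto_one_div_add_atTop_nhds_zero_nat
  have h2 : Tendsto (fun n : ℕ => ((1/4 : ℝ) ^ n * (n.centralBinom : ℝ)) ^ 2) atTop (𝓝 0) := by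
    refine squeeze_zero (fun n => sq_nonneg _) (fun n => ?_) h
    rw [le_div_iff₀ (by positivity)]
    have := sq_centralBinom_le n
    nlinarith [sq_nonneg ((1/4 : ℝ) ^ n * (n.centralBinom : ℝ)),
      (Nat.cast_nonneg n : (0 : ℝ) ≤ n)]
  have h3 := h2.sqrt
  rw [Real.sqrt_zero] at h3
  refine h3.congr fun n => ?_
  rw [Real.sqrt_sq (by positivity)]

theorem ballotTerm_zero (n : ℕ) : ballotTerm 0 n =
    2 * ((1/4 : ℝ) ^ n * (n.centralBinom : ℝ)) -
      2 * ((1/4 : ℝ) ^ (n + 1) * ((n + 1).centralBinom : ℝ)) := by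
  have h : ((n : ℝ) + 1) * ((n + 1).centralBinom : ℝ) = 2 * (2 * n + 1) * n.centralBinom := by
    exact_mod_cast Nat.succ_mul_centralBinom_succ n
  have hp : (0 : ℝ) < n + 1 := by positivity
  have h' : ((n + 1).centralBinom : ℝ) = 2 * (2 * n + 1) * n.centralBinom / (n + 1) := by
    rw [eq_div_iff hp.ne']; linarith
  have h2 : ((2 * n + 1).choose (n + 1) : ℝ) * (n + 1) = (2 * n + 1) * n.centralBinom := by
    have := Nat.add_one_mul_choose_eq (2 * n) n
    rw [Nat.centralBinom]
    exact_mod_cast this.symm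
  have h3 : ((2 * n + 1).choose (n + 1) : ℝ) = (2 * n + 1) * n.centralBinom / (n + 1) := by
    rw [eq_div_iff hp.ne', h2]
  rw [ballotTerm, add_zero, h3, h', pow_succ]
  field_simp
  ring

theorem ballotTerm_telescope (k n : ℕ) :
    (2 * k + 1) * ballotTerm k n - (2 * k + 3) * ballotTerm (k + 1) n =
      4 * ((1/4 : ℝ) ^ (n + 1) * ((2 * (n + 1)).choose (n + 1 + k + 1) : ℝ)) -
        4 * ((1/4 : ℝ) ^ n * ((2 * n).choose (n + k + 1) : ℝ)) := by
  have h1 := choose_succ_mul_cast (2 * n) (n + k)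
  have h2 := choose_succ_mul_cast (2 * n) (n + k + 1)
  have h3 : ((2 * (n + 1)).choose (n + 1 + k + 1) : ℝ) =
      (2 * n).choose (n + k) + 2 * (2 * n).choose (n + k + 1)
        + (2 * n).choose (n + k + 1 + 1) := by
    have : (2 * (n + 1)).choose (n + 1 + k + 1) =
      (2 * n).choose (n + k) + 2 * (2 * n).choose (n + k + 1)
        + (2 * n).choose (n + k + 1 + 1) := by
      rw [show 2 * (n + 1) = 2 * n + 1 + 1 by ring,
        show n + 1 + k + 1 = n + k + 1 + 1 by ring, Nat.choose_succ_succ',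
        Nat.choose_succ_succ', Nat.choose_succ_succ']
      ring
    exact_mod_cast this
  unfold ballotTerm
  rw [h3, show n + (k + 1) + 1 = n + k + 1 + 1 by ring, Nat.choose_succ_succ',
    Nat.choose_succ_succ', pow_succ]
  push_cast at h1 h2 ⊢
  generalize ((2 * n).choose (n + k) : ℝ) = a at *
  generalize ((2 * n).choose (n + k + 1) : ℝ) = b at *
  generalize ((2 * n).choose (n + k + 1 + 1) : ℝ) = c at *
  generalize (1/4 : ℝ) ^ n = q at *
  have : (2 * n + 1 : ℝ) ≠ 0 := by positivity
  field_simp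
  linear_combination 2 * q * h1 - 2 * q * h2

theorem tendsto_choose (k : ℕ) :
    Tendsto (fun n : ℕ => 4 * ((1/4 : ℝ) ^ n * ((2 * n).choose (n + k + 1) : ℝ))) atTop (𝓝 0) := by
  have h : Tendsto (fun n : ℕ => 4 * ((1/4 : ℝ) ^ n * (n.centralBinom : ℝ))) atTop (𝓝 0) := by
    simpa using tendsto_centralBinom.const_mul 4
  refine squeeze_zero (fun n => by positivity) (fun n => ?_) h
  gcongr
  exact Nat.choose_le_centralBinom _ _

theorem hasSum_ballotTerm (k : ℕ) : HasSum (ballotTerm k) (2 / (2 * k + 1)) := by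
  induction k with
  | zero =>
    rw [hasSum_iff_tendsto_nat_of_nonneg (ballotTerm_nonneg 0)]
    have e : ∀ N, ∑ n ∈ Finset.range N, ballotTerm 0 n =
        2 - 2 * ((1/4 : ℝ) ^ N * (N.centralBinom : ℝ)) := by
      intro N
      simp_rw [ballotTerm_zero]
      rw [Finset.sum_range_sub' (fun n => 2 * ((1/4 : ℝ) ^ n * (n.centralBinom : ℝ)))]
      simp
    simp_rw [e]
    simpa using (tendsto_centralBinom.const_mul 2).const_sub 2
  | succ k ih =>
    rw [hasSum_iff_tendsto_nat_of_nonneg (ballotTerm_nonneg (k + 1))] at *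
    have e : ∀ N, ∑ n ∈ Finset.range N, ballotTerm (k + 1) n =
        ((2 * k + 1) * ∑ n ∈ Finset.range N, ballotTerm k n -
          4 * ((1/4 : ℝ) ^ N * ((2 * N).choose (N + k + 1) : ℝ))) / (2 * k + 3) := by
      intro N
      have h := Finset.sum_congr rfl fun n (_ : n ∈ Finset.range N) => ballotTerm_telescope k n
      rw [Finset.sum_sub_distrib, ← Finset.mul_sum, ← Finset.mul_sum,
        Finset.sum_range_sub (fun n => 4 * ((1/4 : ℝ) ^ n * ((2 * n).choose (n + k + 1) : ℝ)))] at h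
      have hp : (2 * k + 3 : ℝ) ≠ 0 := by positivity
      rw [eq_div_iff hp]
      simp only [mul_zero, zero_add, Nat.choose_zero_succ, Nat.cast_zero, sub_zero] at h
      linarith
    simp_rw [e]
    rw [hasSum_iff_tendsto_nat_of_nonneg (ballotTerm_nonneg k)] at ih
    have := ((ih.const_mul (2 * k + 1 : ℝ)).sub (tendsto_choose k)).div_const (2 * k + 3)
    convert this using 2
    push_cast
    field_simp
    ring

theorem summable_one_div_odd_sq : Summable fun k : ℕ => 1 / (2 * (k : ℝ) + 1) ^ 2 := by
  refine Summable.of_nonneg_of_le (fun k => by positivity) (fun k => ?_)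
    ((summable_nat_add_iff 1).2 (Real.summable_one_div_nat_pow.2 one_lt_two))
  push_cast
  apply one_div_le_one_div_of_le (by positivity)
  apply pow_le_pow_left₀ (by positivity)
  linarith [(Nat.cast_nonneg k : (0 : ℝ) ≤ k)]

theorem tsum_Gamma_eq_catalan :
    ∑' n : ℕ, Real.Gamma (3/2) * (Real.Gamma (1 + n) / Real.Gamma (3/2 + n)) / (2 * n + 1) =
      2 * catalan' := by
  set F : ℕ → ℕ → ℝ := fun k n => (-1) ^ k / (2 * k + 1) * ballotTerm k n with hF
  have habs : ∀ k n, |F k n| = 1 / (2 * k + 1) * ballotTerm k n := by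
    intro k n
    rw [hF]
    simp only
    rw [abs_mul, abs_of_nonneg (ballotTerm_nonneg k n), abs_div, abs_pow, abs_neg, abs_one, one_pow,
      abs_of_pos (by positivity)]
  have hs : Summable (Function.uncurry F) := by
    rw [← summable_abs_iff, summable_prod_of_nonneg (fun p => abs_nonneg _)]
    refine ⟨fun k => ?_, ?_⟩
    · simp only [Function.uncurry, habs]
      exact (hasSum_ballotTerm k).summable.mul_left _
    · simp only [Function.uncurry, habs, tsum_mul_left, (hasSum_ballotTerm _).tsum_eq]
      refine (summable_one_div_odd_sq.mul_left 2).congr fun k => ?_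
      field_simp
  have h := hs.tsum_comm
  have e1 : ∀ n : ℕ, ∑' k, F k n =
      Real.Gamma (3/2) * (Real.Gamma (1 + n) / Real.Gamma (3/2 + n)) / (2 * n + 1) := by
    intro n
    have e : ∀ k, F k n = (1/4) ^ n / (2 * n + 1) * altTerm n k := by
      intro k
      simp only [hF, ballotTerm, altTerm]
      ring
    simp_rw [e]
    rw [tsum_mul_left, tsum_altTerm]
    have : (1/4 : ℝ) ^ n * 4 ^ n = 1 := by rw [← mul_pow]; norm_num
    linear_combination (Real.Gamma (3/2) * (Real.Gamma (1 + n) / Real.Gamma (3/2 + n)) /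
      (2 * n + 1)) * this
  have e2 : ∀ k : ℕ, ∑' n, F k n = 2 * ((-1) ^ k / (2 * k + 1) ^ 2) := by
    intro k
    simp only [hF]
    rw [tsum_mul_left, (hasSum_ballotTerm k).tsum_eq]
    field_simp
  simp_rw [e1, e2] at h
  rw [h, tsum_mul_left, catalan']

theorem tsum_catTerm_zero : ∑' n, catTerm 0 n = 8 / √Real.pi * catalan' := by
  have hsp : 0 < √Real.pi := Real.sqrt_pos.2 Real.pi_pos
  have hG : Real.Gamma (3/2) = √Real.pi / 2 := by
    rw [show (3/2 : ℝ) = 1/2 + 1 by norm_num, Real.Gamma_add_one (by norm_num),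
      Real.Gamma_one_half_eq]
    ring
  have e : ∀ n : ℕ, catTerm 0 n = 4 / √Real.pi *
      (Real.Gamma (3/2) * (Real.Gamma (1 + n) / Real.Gamma (3/2 + n)) / (2 * n + 1)) := by
    intro n
    have h1 : (1/2 + n : ℝ) ≠ 0 := by positivity
    have hg := (Real.Gamma_pos_of_pos (show (0 : ℝ) < 1/2 + n by positivity)).ne'
    have h2 : Real.Gamma (1/2 + n) / Real.Gamma (3/2 + n) = 2 / (2 * n + 1) := by
      rw [show (3/2 + n : ℝ) = 1/2 + n + 1 by ring, Real.Gamma_add_one h1]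
      have h3 : (2 * n + 1 : ℝ) ≠ 0 := by positivity
      generalize Real.Gamma (1/2 + n) = a at *
      field_simp
      ring
    unfold catTerm
    rw [mul_zero, add_zero, sub_zero, sub_zero, h2, hG]
    field_simp
    ring
  simp_rw [e]
  rw [tsum_mul_left, tsum_Gamma_eq_catalan]
  ring

theorem catTerm_add_one {x : ℝ} (h0 : 0 ≤ x) (h1 : x ≤ 1/10) (n : ℕ) :
    catTerm x (n + 1) = catTerm x n * ((1/2 + x + n) * (1 - 2 * x + n) / (3/2 - x + n) ^ 2) := by
  have hn : (0 : ℝ) ≤ n := Nat.cast_nonneg n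
  have a1 : 1/2 + x + n ≠ 0 := by positivity
  have a2 : 1 - 2 * x + n ≠ 0 := by intro h; linarith
  have a3 : 3/2 - x + n ≠ 0 := by intro h; linarith
  unfold catTerm
  rw [Nat.cast_succ, ← add_assoc, ← add_assoc, ← add_assoc, Real.Gamma_add_one a1,
    Real.Gamma_add_one a2, Real.Gamma_add_one a3]
  generalize 3/2 - x + (n : ℝ) = a at *
  generalize 1/2 + x + (n : ℝ) = b at *
  generalize 1 - 2 * x + (n : ℝ) = c at *
  field_simp

theorem catTerm_pos {x : ℝ} (h0 : 0 ≤ x) (h1 : x ≤ 1/10) (n : ℕ) : 0 < catTerm x n := by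
  have hn : (0 : ℝ) ≤ n := Nat.cast_nonneg n
  have a1 := Real.Gamma_pos_of_pos (show 0 < 1/2 + x + n by linarith)
  have a2 := Real.Gamma_pos_of_pos (show 0 < 1 - 2 * x + n by linarith)
  have a3 := Real.Gamma_pos_of_pos (show 0 < 3/2 - x + n by linarith)
  unfold catTerm
  positivity

/-- A summable majorant (up to scaling) of `catTerm x` for small `x`. -/
noncomputable def catBound (n : ℕ) : ℝ :=
  Real.Gamma (3/5 + n) / Real.Gamma (7/5 + n) * (Real.Gamma (1 + n) / Real.Gamma (7/5 + n))

theorem catBound_pos (n : ℕ) : 0 < catBound n := by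
  have a1 := Real.Gamma_pos_of_pos (show (0 : ℝ) < 3/5 + n by positivity)
  have a2 := Real.Gamma_pos_of_pos (show (0 : ℝ) < 1 + n by positivity)
  have a3 := Real.Gamma_pos_of_pos (show (0 : ℝ) < 7/5 + n by positivity)
  unfold catBound
  positivity

theorem catBound_add_one (n : ℕ) :
    catBound (n + 1) = catBound n * ((3/5 + n) * (1 + n) / (7/5 + n) ^ 2) := by
  have a1 : (3/5 + n : ℝ) ≠ 0 := by positivity
  have a2 : (1 + n : ℝ) ≠ 0 := by positivity
  have a3 : (7/5 + n : ℝ) ≠ 0 := by positivity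
  unfold catBound
  rw [Nat.cast_succ, ← add_assoc, ← add_assoc, ← add_assoc, Real.Gamma_add_one a1,
    Real.Gamma_add_one a2, Real.Gamma_add_one a3]
  generalize 3/5 + (n : ℝ) = a at *
  generalize 1 + (n : ℝ) = b at *
  generalize 7/5 + (n : ℝ) = c at *
  field_simp

theorem catTerm_le {x : ℝ} (h0 : 0 ≤ x) (h1 : x ≤ 1/10) (n : ℕ) :
    catTerm x n ≤ catTerm x 0 / catBound 0 * catBound n := by
  induction n with
  | zero => rw [div_mul_cancel₀ _ (catBound_pos 0).ne']
  | succ n ih =>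
    have hn : (0 : ℝ) ≤ n := Nat.cast_nonneg n
    rw [catTerm_add_one h0 h1, catBound_add_one, ← mul_assoc]
    have hp : 0 ≤ catTerm x 0 / catBound 0 * catBound n :=
      mul_nonneg (div_nonneg (catTerm_pos h0 h1 0).le (catBound_pos 0).le) (catBound_pos n).le
    refine mul_le_mul ih ?_ ?_ hp
    · have : 0 < 3/2 - x + n := by linarith
      apply div_le_div₀ (by positivity) _ (by positivity) _
      · apply mul_le_mul <;> linarith
      · apply pow_le_pow_left₀ (by positivity); linarith
    · apply div_nonneg (mul_nonneg (by linarith) (by linarith)) (by positivity)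

theorem continuousAt_Gamma_of_pos {s : ℝ} (hs : 0 < s) : ContinuousAt Real.Gamma s :=
  (Real.differentiableAt_Gamma fun m => by
    have : (0 : ℝ) ≤ m := Nat.cast_nonneg m
    intro h; linarith).continuousAt

theorem continuousAt_catTerm (n : ℕ) : ContinuousAt (fun x => catTerm x n) 0 := by
  have a1 : ContinuousAt (fun x : ℝ => Real.Gamma (1/2 + x + n)) 0 :=
    ContinuousAt.comp' (continuousAt_Gamma_of_pos (by positivity)) (by fun_prop)
  have a2 : ContinuousAt (fun x : ℝ => Real.Gamma (1 - 2 * x + n)) 0 :=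
    ContinuousAt.comp' (continuousAt_Gamma_of_pos (by simp; positivity)) (by fun_prop)
  have a3 : ContinuousAt (fun x : ℝ => Real.Gamma (3/2 - x + n)) 0 :=
    ContinuousAt.comp' (continuousAt_Gamma_of_pos (by simp; positivity)) (by fun_prop)
  have a4 : Real.Gamma (3/2 - 0 + n) ≠ 0 := (Real.Gamma_pos_of_pos (by simp; positivity)).ne'
  exact (a1.div a3 a4).mul (a2.div a3 a4)

theorem tendsto_tsum_catTerm :
    Tendsto (fun x => ∑' n, catTerm x n) (𝓝[>] 0) (𝓝 (8 / √Real.pi * catalan')) := by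
  rw [← tsum_catTerm_zero]
  have hb : Summable fun n => (catTerm 0 0 + 1) / catBound 0 * catBound n :=
    (summable_Gamma_ratio_mul (3/5) (7/5) 1 (7/5) (by norm_num)).mul_left _
  refine tendsto_tsum_of_dominated_convergence hb
    (fun n => (continuousAt_catTerm n).tendsto.mono_left nhdsWithin_le_nhds) ?_
  have hc : ∀ᶠ x in 𝓝[>] (0 : ℝ), catTerm x 0 < catTerm 0 0 + 1 :=
    nhdsWithin_le_nhds ((continuousAt_catTerm 0).tendsto.eventually (gt_mem_nhds (by linarith)))
  have hx : ∀ᶠ x in 𝓝[>] (0 : ℝ), x < 1/10 := nhdsWithin_le_nhds (gt_mem_nhds (by norm_num))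
  filter_upwards [hc, hx, self_mem_nhdsWithin] with x h1 h2 h3 n
  have h3 : 0 < x := h3
  rw [Real.norm_of_nonneg (catTerm_pos h3.le h2.le n).le]
  refine (catTerm_le h3.le h2.le n).trans ?_
  have := catBound_pos n
  have := catBound_pos 0
  gcongr

/-- If a real-analytic function satisfies `f x / x ^ n → L` as `x → 0⁺`, then
`f x = L x ^ n + O(x ^ (n + 1))` as `x → 0`. -/
theorem AnalyticAt.isBigO_sub_of_tendsto_div_pow {f : ℝ → ℝ} (hf : AnalyticAt ℝ f 0) {n : ℕ} {L : ℝ}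
    (h : Tendsto (fun x => f x / x ^ n) (𝓝[>] 0) (𝓝 L)) :
    (fun x => f x - L * x ^ n) =O[𝓝 0] fun x => x ^ (n + 1) := by
  have hB : AnalyticAt ℝ (fun x => f x - L * x ^ n) 0 := by fun_prop
  have hlim : Tendsto (fun x => (f x - L * x ^ n) / x ^ n) (𝓝[>] 0) (𝓝 0) := by
    have := h.sub_const L
    rw [sub_self] at this
    refine this.congr' ?_
    filter_upwards [self_mem_nhdsWithin] with x hx
    have : x ^ n ≠ 0 := pow_ne_zero _ (ne_of_gt hx)
    field_simp
  by_cases h0 : ∀ᶠ x in 𝓝 0, f x - L * x ^ n = 0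
  · exact (Asymptotics.isBigO_zero _ _).congr' (h0.mono fun x hx => hx.symm) EventuallyEq.rfl
  · obtain ⟨m, g, hg, hg0, hfg⟩ := hB.exists_eventuallyEq_pow_smul_nonzero_iff.mpr h0
    simp only [sub_zero, smul_eq_mul] at hfg
    have hgc : Tendsto g (𝓝 0) (𝓝 (g 0)) := hg.continuousAt
    rcases Nat.lt_or_ge n m with hm | hm
    · obtain ⟨d, rfl⟩ := Nat.exists_eq_add_of_lt hm
      have h1 : (fun x : ℝ => x ^ d * g x) =O[𝓝 0] fun _ => (1 : ℝ) :=
        (((continuous_pow d).tendsto 0).mul hgc).isBigO_one ℝ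
      have h2 := (Asymptotics.isBigO_refl (fun x : ℝ => x ^ (n + 1)) (𝓝 0)).mul h1
      refine h2.congr' ?_ (Eventually.of_forall fun x => mul_one _)
      filter_upwards [hfg] with x hx
      rw [hx]; ring
    · obtain ⟨d, rfl⟩ := Nat.exists_eq_add_of_le hm
      refine absurd (tendsto_nhds_unique
        (hgc.mono_left (nhdsWithin_le_nhds (s := Set.Ioi 0))) ?_) hg0
      have hd : Tendsto (fun x : ℝ => x ^ d) (𝓝[>] 0) (𝓝 (0 ^ d)) :=
        ((continuous_pow d).tendsto 0).mono_left nhdsWithin_le_nhds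
      have h1 := hlim.mul hd
      rw [zero_mul] at h1
      refine h1.congr' ?_
      filter_upwards [self_mem_nhdsWithin, nhdsWithin_le_nhds hfg] with x hx hfx
      have hx0 : x ≠ 0 := ne_of_gt hx
      rw [hfx]
      field_simp
      ring

/-- The complex-variable version of the summand of the series. -/
noncomputable def seriesTerm (n : ℕ) (z : ℂ) : ℂ :=
  (2 : ℂ) ^ (-6 * (n + z)) *
    (Complex.Gamma (1/2 + (n + z)) / Complex.Gamma (1/2) /
      (Complex.Gamma (1 + (n + z)) / Complex.Gamma 1)) ^ 3 * (42 * (n + z) + 5)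

theorem differentiableAt_Gamma_of_re_pos {s : ℂ} (hs : 0 < s.re) :
    DifferentiableAt ℂ Complex.Gamma s :=
  Complex.differentiableAt_Gamma s fun m h => by
    have : (0 : ℝ) ≤ m := Nat.cast_nonneg m
    rw [h] at hs
    simp at hs
    linarith

theorem neg_quarter_le_re {z : ℂ} (hz : z ∈ Metric.closedBall (0 : ℂ) (1/4)) : -(1/4) ≤ z.re := by
  rw [mem_closedBall_zero_iff] at hz
  linarith [neg_abs_le z.re, Complex.abs_re_le_norm z]

theorem differentiableAt_Gamma_ratio (n : ℕ) {z : ℂ} (hz : z ∈ Metric.closedBall (0 : ℂ) (1/4)) :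
    DifferentiableAt ℂ
      (fun w : ℂ => Complex.Gamma (1/2 + (n + w)) / Complex.Gamma (1 + (n + w))) z := by
  have h := neg_quarter_le_re hz
  have hn : (0 : ℝ) ≤ n := Nat.cast_nonneg n
  have h1 : 0 < (1/2 + (n + z) : ℂ).re := by
    simp; linarith
  have h2 : 0 < (1 + (n + z) : ℂ).re := by
    simp; linarith
  exact ((differentiableAt_Gamma_of_re_pos h1).comp z (f := fun w : ℂ => 1/2 + (n + w))
      (by fun_prop)).div ((differentiableAt_Gamma_of_re_pos h2).comp z
      (f := fun w : ℂ => 1 + (n + w)) (by fun_prop)) (Complex.Gamma_ne_zero_of_re_pos h2)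

theorem norm_Gamma_ratio_succ_le (n : ℕ) {z : ℂ} (hz : z ∈ Metric.closedBall (0 : ℂ) (1/4)) :
    ‖Complex.Gamma (1/2 + ((n + 1 : ℕ) + z)) / Complex.Gamma (1 + ((n + 1 : ℕ) + z))‖ ≤
      ‖Complex.Gamma (1/2 + (n + z)) / Complex.Gamma (1 + (n + z))‖ := by
  have h := neg_quarter_le_re hz
  have hn : (0 : ℝ) ≤ n := Nat.cast_nonneg n
  have h1 : 0 < (1/2 + (n + z) : ℂ).re := by
    simp; linarith
  have h2 : 0 < (1 + (n + z) : ℂ).re := by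
    simp; linarith
  have n1 : (1/2 + (n + z) : ℂ) ≠ 0 := fun h => by rw [h] at h1; simp at h1
  have n2 : (1 + (n + z) : ℂ) ≠ 0 := fun h => by rw [h] at h2; simp at h2
  rw [show (1/2 + ((n + 1 : ℕ) + z) : ℂ) = 1/2 + (n + z) + 1 by push_cast; ring,
    show (1 + ((n + 1 : ℕ) + z) : ℂ) = 1 + (n + z) + 1 by push_cast; ring,
    Complex.Gamma_add_one _ n1, Complex.Gamma_add_one _ n2, mul_div_mul_comm, norm_mul, norm_div]
  refine mul_le_of_le_one_left (norm_nonneg _) ?_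
  rw [div_le_one (norm_pos_iff.mpr n2), ← sq_le_sq₀ (norm_nonneg _) (norm_nonneg _),
    Complex.sq_norm, Complex.sq_norm, Complex.normSq_apply, Complex.normSq_apply]
  simp at h1 h2 ⊢
  nlinarith

theorem exists_norm_Gamma_ratio_le : ∃ C : ℝ, ∀ n : ℕ, ∀ z ∈ Metric.closedBall (0 : ℂ) (1/4),
    ‖Complex.Gamma (1/2 + (n + z)) / Complex.Gamma (1 + (n + z))‖ ≤ C := by
  obtain ⟨C, hC⟩ := (isCompact_closedBall (0 : ℂ) (1/4)).exists_bound_of_continuousOn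
    (f := fun w : ℂ => Complex.Gamma (1/2 + ((0 : ℕ) + w)) / Complex.Gamma (1 + ((0 : ℕ) + w)))
    fun z hz => (differentiableAt_Gamma_ratio 0 hz).continuousAt.continuousWithinAt
  refine ⟨C, fun n z hz => ?_⟩
  induction n with
  | zero => exact hC z hz
  | succ n ih => exact (norm_Gamma_ratio_succ_le n hz).trans ih

theorem seriesTerm_eq (n : ℕ) (z : ℂ) : seriesTerm n z =
    (2 : ℂ) ^ (-6 * (n + z)) *
      (Complex.Gamma (1/2 + (n + z)) / Complex.Gamma (1 + (n + z)) / Complex.Gamma (1/2)) ^ 3 *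
      (42 * (n + z) + 5) := by
  rw [seriesTerm, Complex.Gamma_one, div_one, div_right_comm]

theorem differentiableOn_seriesTerm (n : ℕ) :
    DifferentiableOn ℂ (seriesTerm n) (Metric.ball 0 (1/4)) := by
  intro z hz
  have h := differentiableAt_Gamma_ratio n (Metric.ball_subset_closedBall hz)
  rw [funext (seriesTerm_eq n)]
  refine DifferentiableAt.differentiableWithinAt ?_
  refine DifferentiableAt.mul (DifferentiableAt.mul ?_ ((h.div_const _).pow 3)) (by fun_prop)
  exact DifferentiableAt.const_cpow (by fun_prop) (Or.inl two_ne_zero)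

theorem norm_seriesTerm_le {C : ℝ} (n : ℕ) {z : ℂ} (hz : z ∈ Metric.ball (0 : ℂ) (1/4))
    (hC : ‖Complex.Gamma (1/2 + (n + z)) / Complex.Gamma (1 + (n + z))‖ ≤ C) :
    ‖seriesTerm n z‖ ≤
      4 * (C / ‖Complex.Gamma (1/2)‖) ^ 3 * ((42 * n + 16) * (1/64) ^ n) := by
  have hz' := Metric.ball_subset_closedBall hz
  have hre := neg_quarter_le_re hz'
  rw [mem_closedBall_zero_iff] at hz'
  have h1 : ‖(2 : ℂ) ^ (-6 * (n + z))‖ ≤ 4 * (1/64) ^ n := by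
    have := Complex.norm_cpow_eq_rpow_re_of_pos (show (0 : ℝ) < 2 by norm_num) (-6 * (n + z))
    push_cast at this
    rw [this]
    have e : (4 : ℝ) * (1/64) ^ n = 2 ^ (2 - 6 * n : ℝ) := by
      rw [Real.rpow_sub two_pos, Real.rpow_mul two_pos.le, Real.rpow_natCast, one_div, inv_pow]
      norm_num [div_eq_mul_inv]
    rw [e]
    refine Real.rpow_le_rpow_of_exponent_le one_le_two ?_
    simp
    linarith
  have h2 : ‖(42 * (n + z) + 5 : ℂ)‖ ≤ 42 * n + 16 := by
    refine (norm_add_le _ _).trans ?_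
    have := norm_add_le (n : ℂ) z
    rw [norm_mul]
    simp at this ⊢
    linarith
  have hC0 : 0 ≤ C := (norm_nonneg _).trans hC
  rw [seriesTerm_eq, norm_mul, norm_mul, norm_pow, norm_div _ (Complex.Gamma (1/2))]
  calc _ ≤ 4 * (1/64) ^ n * (C / ‖Complex.Gamma (1/2)‖) ^ 3 * (42 * n + 16) := by gcongr
    _ = _ := by ring

theorem analyticAt_tsum_seriesTerm : AnalyticAt ℂ (fun z => ∑' n, seriesTerm n z) 0 := by
  obtain ⟨C, hC⟩ := exists_norm_Gamma_ratio_le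
  have hs : Summable fun n : ℕ => (42 * (n : ℝ) + 16) * (1/64) ^ n := by
    have a := summable_pow_mul_geometric_of_norm_lt_one 1 (r := (1/64 : ℝ)) (by norm_num)
    have b := summable_geometric_of_lt_one (r := (1/64 : ℝ)) (by norm_num) (by norm_num)
    refine ((a.mul_left 42).add (b.mul_left 16)).congr fun n => ?_
    ring
  have hd := Complex.differentiableOn_tsum_of_summable_norm
    (hs.mul_left (4 * (C / ‖Complex.Gamma (1/2)‖) ^ 3)) differentiableOn_seriesTerm
    Metric.isOpen_ball fun n z hz =>
      norm_seriesTerm_le n hz (hC n z (Metric.ball_subset_closedBall hz))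
  exact hd.analyticAt (Metric.ball_mem_nhds 0 (by norm_num))

theorem seriesTerm_ofReal (n : ℕ) (x : ℝ) : seriesTerm n x =
    (((2 : ℝ) ^ (-(6 : ℝ) * (n + x)) * (pochG (1/2) (n + x) / pochG 1 (n + x)) ^ 3 *
      (42 * (n + x) + 5) : ℝ) : ℂ) := by
  unfold seriesTerm pochG
  push_cast [Complex.ofReal_cpow two_pos.le, ← Complex.Gamma_ofReal]
  rfl

theorem analyticAt_series : AnalyticAt ℝ (fun x : ℝ => (1/16 : ℝ) * (∑' n : ℕ,
    (2 : ℝ) ^ (-(6 : ℝ) * ((n : ℝ) + x)) *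
      (pochG (1/2) ((n : ℝ) + x) / pochG 1 ((n : ℝ) + x)) ^ 3 * (42 * ((n : ℝ) + x) + 5))) 0 := by
  refine AnalyticAt.mul analyticAt_const ?_
  have h := AnalyticAt.re_ofReal (x := 0) (f := fun z => ∑' n, seriesTerm n z)
    (by simpa using analyticAt_tsum_seriesTerm)
  refine h.congr (Eventually.of_forall fun x => ?_)
  simp only [seriesTerm_ofReal]
  rw [← Complex.ofReal_tsum, Complex.ofReal_re]

/-- The elementary part `cos (3πx) / (π cos³ (πx))` of the sum. -/
noncomputable def trigPart (x : ℝ) : ℝ :=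
  Real.cos (Real.pi * (3 * x)) / (Real.pi * Real.cos (Real.pi * x) ^ 3)

theorem analyticAt_trigPart : AnalyticAt ℝ trigPart 0 := by
  unfold trigPart
  refine AnalyticAt.div (by fun_prop) (by fun_prop) ?_
  simp [Real.pi_ne_zero]

theorem abs_mul_cos_sub_sin_le {t : ℝ} (ht : |t| ≤ 1) :
    |t * Real.cos t - Real.sin t| ≤ |t| ^ 3 := by
  have hc := Real.cos_bound ht
  have hs := Real.sin_bound ht
  have e : t * Real.cos t - Real.sin t = t * (Real.cos t - (1 - t ^ 2 / 2)) -
      (Real.sin t - (t - t ^ 3 / 6)) - t ^ 3 / 3 := by ring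
  have h3 : |t ^ 3 / 3| = |t| ^ 3 / 3 := by rw [abs_div, abs_pow]; norm_num
  rw [e]
  refine (abs_sub _ _).trans ((add_le_add_left (abs_sub _ _) _).trans ?_)
  rw [abs_mul, h3]
  have h0 := abs_nonneg t
  have h4 : |t| ^ 5 ≤ |t| ^ 3 := pow_le_pow_of_le_one h0 ht (by norm_num)
  have h5 : |t| * |Real.cos t - (1 - t ^ 2 / 2)| ≤ |t| * (|t| ^ 4 * (5 / 96)) := by gcongr
  nlinarith

theorem trigPart_isBigO :
    (fun x => trigPart x - (1 / Real.pi - 3 * Real.pi * x ^ 2)) =O[𝓝 0] fun x => x ^ 4 := by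
  have hcont : ContinuousAt (fun x : ℝ => 1 / (Real.pi * Real.cos (Real.pi * x) ^ 3)) 0 := by
    refine ContinuousAt.div (by fun_prop) (by fun_prop) ?_
    simp [Real.pi_ne_zero]
  have hcos : ∀ᶠ x : ℝ in 𝓝 0, Real.cos (Real.pi * x) ≠ 0 := by
    have : ContinuousAt (fun x : ℝ => Real.cos (Real.pi * x)) 0 := by fun_prop
    exact this.eventually_ne (by simp)
  have hsmall : ∀ᶠ x : ℝ in 𝓝 0, |Real.pi * x| < 1 := by
    have : ContinuousAt (fun x : ℝ => |Real.pi * x|) 0 := by fun_prop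
    exact this.eventually_lt_const (by simp)
  have h1 : (fun x : ℝ => 3 * Real.cos (Real.pi * x) *
      ((Real.pi * x * Real.cos (Real.pi * x) - Real.sin (Real.pi * x)) *
        (Real.pi * x * Real.cos (Real.pi * x) + Real.sin (Real.pi * x)))) =O[𝓝 0]
      fun x => x ^ 4 := by
    refine Asymptotics.IsBigO.of_bound (6 * Real.pi ^ 4) ?_
    filter_upwards [hsmall] with x hx
    have hp := Real.pi_pos
    have e : 6 * Real.pi ^ 4 * ‖x ^ 4‖ = 3 * 1 * (|Real.pi * x| ^ 3 * (2 * |Real.pi * x|)) := by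
      rw [norm_pow, Real.norm_eq_abs, abs_mul, abs_of_pos hp]; ring
    rw [e]
    generalize Real.pi * x = t at *
    rw [Real.norm_eq_abs, abs_mul, abs_mul, abs_mul, abs_of_pos (show (0 : ℝ) < 3 by norm_num)]
    have a1 := abs_mul_cos_sub_sin_le hx.le
    have a2 : |t * Real.cos t + Real.sin t| ≤ 2 * |t| := by
      refine (abs_add_le _ _).trans ?_
      rw [abs_mul]
      have := Real.abs_sin_le_abs (x := t)
      have := mul_le_of_le_one_right (abs_nonneg t) (Real.abs_cos_le_one t)
      linarith
    have a3 := Real.abs_cos_le_one t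
    gcongr
  have h2 := h1.mul (hcont.tendsto.isBigO_one ℝ)
  refine h2.congr' ?_ (Eventually.of_forall fun x => mul_one _)
  filter_upwards [hcos] with x hx
  have hp := Real.pi_ne_zero
  rw [trigPart, show Real.pi * (3 * x) = 3 * (Real.pi * x) by ring, Real.cos_three_mul]
  have hsq := Real.sin_sq_add_cos_sq (Real.pi * x)
  generalize Real.sin (Real.pi * x) = s at *
  generalize Real.cos (Real.pi * x) = c at *
  field_simp
  linear_combination -3 * hsq

theorem Gamma_half_add_mul_half_sub (x : ℝ) :
    Real.Gamma (1/2 + x) * Real.Gamma (1/2 - x) = Real.pi / Real.cos (Real.pi * x) := by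
  rw [show (1/2 : ℝ) - x = 1 - (1/2 + x) by ring, Real.Gamma_mul_Gamma_one_sub,
    show Real.pi * (1/2 + x) = Real.pi * x + Real.pi / 2 by ring, Real.sin_add_pi_div_two]

theorem series_eq_trigPart_add {x : ℝ} (hx : 0 < x) (hx6 : x < 1/6) :
    (1/16 : ℝ) * (∑' n : ℕ, (2 : ℝ) ^ (-(6 : ℝ) * ((n : ℝ) + x)) *
      (pochG (1/2) ((n : ℝ) + x) / pochG 1 ((n : ℝ) + x)) ^ 3 * (42 * ((n : ℝ) + x) + 5)) =
    trigPart x + Real.Gamma (1/2 + x) ^ 4 * Real.Gamma (1/2 - x) / Real.pi ^ 3 *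
      (2 * Real.sin (Real.pi * x)) / Real.Gamma (2 * x) ^ 2 * ∑' n, catTerm x n := by
  have g1 := (Real.Gamma_pos_of_pos (show 0 < 1/2 + x by linarith)).ne'
  have g2 := (Real.Gamma_pos_of_pos (show 0 < 1/2 - x by linarith)).ne'
  have g3 := (Real.Gamma_pos_of_pos (show 0 < 2 * x by linarith)).ne'
  have hc : Real.cos (Real.pi * x) ≠ 0 := by
    intro h
    have := Gamma_half_add_mul_half_sub x
    rw [h, div_zero] at this
    exact mul_ne_zero g1 g2 this
  have hp := Real.pi_ne_zero
  have hr := Gamma_half_add_mul_half_sub x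
  rw [eq_div_iff hc] at hr
  have hmain := tsum_sq_Gamma_ratio hx hx6
  rw [series_eq_tsum_sq hx, trigPart]
  generalize ∑' j : ℕ, (Real.Gamma (1/2 + x + j) / Real.Gamma (1 + 2 * x + j)) ^ 2 = T at *
  generalize ∑' n, catTerm x n = K at *
  generalize Real.Gamma (1/2 + x) = a at *
  generalize Real.Gamma (1/2 - x) = b at *
  generalize Real.Gamma (2 * x) = d at *
  generalize Real.cos (Real.pi * (3 * x)) = c3 at *
  generalize Real.cos (Real.pi * x) = c at *
  generalize Real.sin (Real.pi * x) = s at *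
  have hT : T = b / a * (b * d / a * (c3 / c) + a / d * (2 * s) * K) := by
    rw [← hmain]; field_simp
  have hb : b = Real.pi / (a * c) := by
    rw [eq_div_iff (mul_ne_zero g1 hc), ← hr]; ring
  rw [hT, hb]
  field_simp

theorem tendsto_series_sub_trigPart : Tendsto (fun x : ℝ => ((1/16 : ℝ) * (∑' n : ℕ,
    (2 : ℝ) ^ (-(6 : ℝ) * ((n : ℝ) + x)) *
      (pochG (1/2) ((n : ℝ) + x) / pochG 1 ((n : ℝ) + x)) ^ 3 * (42 * ((n : ℝ) + x) + 5)) -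
      trigPart x) / x ^ 3) (𝓝[>] 0) (𝓝 (64 * catalan')) := by
  have hp := Real.pi_pos
  have hG : Tendsto (fun x : ℝ => Real.Gamma (1/2 + x) ^ 4 * Real.Gamma (1/2 - x) / Real.pi ^ 3 /
      Real.Gamma (1 + 2 * x) ^ 2) (𝓝[>] 0)
      (𝓝 (√Real.pi ^ 4 * √Real.pi / Real.pi ^ 3 / 1 ^ 2)) := by
    have c1 : ContinuousAt (fun x : ℝ => Real.Gamma (1/2 + x)) 0 :=
      ContinuousAt.comp (g := Real.Gamma) (f := fun x : ℝ => 1/2 + x)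
        (continuousAt_Gamma_of_pos (by norm_num)) (by fun_prop)
    have c2 : ContinuousAt (fun x : ℝ => Real.Gamma (1/2 - x)) 0 :=
      ContinuousAt.comp (g := Real.Gamma) (f := fun x : ℝ => 1/2 - x)
        (continuousAt_Gamma_of_pos (by norm_num)) (by fun_prop)
    have c3 : ContinuousAt (fun x : ℝ => Real.Gamma (1 + 2 * x)) 0 :=
      ContinuousAt.comp (g := Real.Gamma) (f := fun x : ℝ => 1 + 2 * x)
        (continuousAt_Gamma_of_pos (by norm_num)) (by fun_prop)
    have c := (((c1.pow 4).mul c2).div_const (Real.pi ^ 3)).div (c3.pow 2) (by simp)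
    refine (c.tendsto.mono_left (nhdsWithin_le_nhds (s := Set.Ioi 0))).congr' ?_ |>.trans ?_
    · exact EventuallyEq.rfl
    · simp [Real.Gamma_one_half_eq, -one_div]
  have hsin : Tendsto (fun x : ℝ => Real.sin (Real.pi * x) / x) (𝓝[>] 0) (𝓝 Real.pi) := by
    have h : HasDerivAt (fun x : ℝ => Real.sin (Real.pi * x))
        (Real.cos (Real.pi * 0) * Real.pi) 0 := by
      simpa using ((hasDerivAt_id (0 : ℝ)).const_mul Real.pi).sin
    have := h.tendsto_slope_zero_right
    simp at this
    refine this.congr fun x => ?_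
    ring
  have h := (hG.mul (hsin.const_mul 8)).mul tendsto_tsum_catTerm
  have hval : √Real.pi ^ 4 * √Real.pi / Real.pi ^ 3 / 1 ^ 2 * (8 * Real.pi) *
      (8 / √Real.pi * catalan') = 64 * catalan' := by
    have hs : √Real.pi ≠ 0 := (Real.sqrt_pos.mpr hp).ne'
    have h4 : √Real.pi ^ 4 = Real.pi ^ 2 := by
      rw [show 4 = 2 * 2 by norm_num, pow_mul, Real.sq_sqrt hp.le]
    rw [h4]
    field_simp
    ring
  rw [hval] at h
  refine h.congr' ?_
  filter_upwards [Ioo_mem_nhdsGT (show (0 : ℝ) < 1/6 by norm_num)] with x hx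
  have hx0 : x ≠ 0 := hx.1.ne'
  have g3 := (Real.Gamma_pos_of_pos (show 0 < 2 * x by linarith [hx.1])).ne'
  rw [series_eq_trigPart_add hx.1 hx.2, add_sub_cancel_left, add_comm 1 (2 * x),
    Real.Gamma_add_one (mul_ne_zero two_ne_zero hx0)]
  generalize Real.Gamma (1/2 + x) = a
  generalize Real.Gamma (1/2 - x) = b
  field_simp
  ring

/-- As `x → 0`,
`(1/16) ∑_{n≥0} 2^{-6(n+x)} ((1/2)_{n+x}/(1)_{n+x})³ (42(n+x)+5)
 = 1/π - 3π x² + 64 G x³ + O(x⁴)`. -/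
theorem identity2_expansion :
    (fun x : ℝ =>
      (1/16 : ℝ) * (∑' n : ℕ,
          (2 : ℝ) ^ (-(6 : ℝ) * ((n : ℝ) + x)) *
            (pochG (1/2) ((n : ℝ) + x) / pochG 1 ((n : ℝ) + x)) ^ 3 *
            (42 * ((n : ℝ) + x) + 5))
        - (1 / Real.pi - 3 * Real.pi * x ^ 2 + 64 * catalan' * x ^ 3))
      =O[nhds 0] (fun x : ℝ => x ^ 4) := by
  have h1 := (analyticAt_series.sub analyticAt_trigPart).isBigO_sub_of_tendsto_div_pow (n := 3)
    tendsto_series_sub_trigPart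
  refine (h1.add trigPart_isBigO).congr_left fun x => ?_
  simp only [Pi.sub_apply]
  ring
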